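/- arXiv:1701.00026 — 2 statements merged into one kernel-verified Lean document; each statement's English description precedes it below -/
import Mathlib

section
/- Let R be a commutative ring. The following are equivalent: (1) every R-module is almost injective; (2) every R-module M contains a semisimple submodule N such that the quotient M/N is injective. -/
universe u v w

section Defs

variable (A : Type u) [Ring A]

/-- The radical of a module: the intersection of all maximal submodules
(`⊤` if there are none). -/
def modRad (M : Type w) [AddCommGroup M] [Module A M] : Submodule A M :=
  sInf {P : Submodule A M | IsCoatom P}

/-- The socle of a module: the sum of all simple submodules. -/
def modSocle (M : Type w) [AddCommGroup M] [Module A M] : Submodule A M :=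
  sSup {S : Submodule A M | IsAtom S}

/-- A submodule `N` of `M` is small if `N ⊔ K = ⊤` implies `K = ⊤`. -/
def IsSmallSubmodule {M : Type w} [AddCommGroup M] [Module A M] (N : Submodule A M) : Prop :=
  ∀ K : Submodule A M, N ⊔ K = ⊤ → K = ⊤

/-- `N` is a direct summand of `M`. -/
def IsDirectSummand {M : Type w} [AddCommGroup M] [Module A M] (N : Submodule A M) : Prop :=
  ∃ N' : Submodule A M, IsCompl N N'

/-- `N` is an essential submodule of `M`. -/
def IsEssentialSubmodule {M : Type w} [AddCommGroup M] [Module A M] (N : Submodule A M) : Prop :=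
  ∀ K : Submodule A M, K ≠ ⊥ → N ⊓ K ≠ ⊥

/-- An `I₀`-module: every non-small submodule contains a nonzero direct summand. -/
def IsI0Module (M : Type w) [AddCommGroup M] [Module A M] : Prop :=
  ∀ N : Submodule A M, ¬ IsSmallSubmodule A N →
    ∃ D : Submodule A M, D ≠ ⊥ ∧ D ≤ N ∧ IsDirectSummand A D

/-- A `V`-module: every proper submodule is an intersection of maximal submodules. -/
def IsVModule (M : Type w) [AddCommGroup M] [Module A M] : Prop :=
  ∀ N : Submodule A M, N ≠ ⊤ →
    ∃ S : Set (Submodule A M), (∀ P ∈ S, IsCoatom P) ∧ N = sInf S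

/-- A local module: it has a proper submodule containing every proper submodule. -/
def IsLocalModule (M : Type w) [AddCommGroup M] [Module A M] : Prop :=
  ∃ P : Submodule A M, P ≠ ⊤ ∧ ∀ K : Submodule A M, K ≠ ⊤ → K ≤ P

/-- A module of composition length two: it has a submodule which is simultaneously an atom
and a coatom of its submodule lattice, i.e. a composition series `0 ⋖ S ⋖ M`. -/
def HasLengthTwo (M : Type w) [AddCommGroup M] [Module A M] : Prop :=
  ∃ S : Submodule A M, IsAtom S ∧ IsCoatom S

/-- A uniform module: nonzero, and any two nonzero submodules intersect nontrivially. -/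
def IsUniformModule (M : Type w) [AddCommGroup M] [Module A M] : Prop :=
  Nontrivial M ∧ ∀ K L : Submodule A M, K ≠ ⊥ → L ≠ ⊥ → K ⊓ L ≠ ⊥

/-- A uniserial module: submodules are linearly ordered by inclusion. -/
def IsUniserialModule (M : Type w) [AddCommGroup M] [Module A M] : Prop :=
  ∀ K L : Submodule A M, K ≤ L ∨ L ≤ K

/-- A semiartinian module: every nonzero quotient has a nonzero socle. -/
def IsSemiartinianModule (M : Type w) [AddCommGroup M] [Module A M] : Prop :=
  ∀ N : Submodule A M, N ≠ ⊤ → modSocle A (M ⧸ N) ≠ ⊥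

/-- `U` is `M`-injective: homomorphisms from submodules of `M` to `U` extend to `M`. -/
def RelInjective (M : Type v) (U : Type w) [AddCommGroup M] [Module A M]
    [AddCommGroup U] [Module A U] : Prop :=
  ∀ (K : Submodule A M) (f : K →ₗ[A] U), ∃ g : M →ₗ[A] U, ∀ x : K, g (x : M) = f x

/-- `P` is `M`-projective: homomorphisms from `P` to quotients of `M` lift to `M`. -/
def RelProjective (M : Type v) (P : Type w) [AddCommGroup M] [Module A M]
    [AddCommGroup P] [Module A P] : Prop :=
  ∀ (K : Submodule A M) (f : P →ₗ[A] M ⧸ K), ∃ h : P →ₗ[A] M, ∀ x : P, K.mkQ (h x) = f x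

/-- `M` is almost `N`-projective. -/
def AlmostNProjective (M : Type v) (N : Type w) [AddCommGroup M] [Module A M]
    [AddCommGroup N] [Module A N] : Prop :=
  ∀ (K : Submodule A N) (f : M →ₗ[A] N ⧸ K),
    (∃ h : M →ₗ[A] N, ∀ x : M, K.mkQ (h x) = f x) ∨
    (∃ N' : Submodule A N, N' ≠ ⊥ ∧ IsDirectSummand A N' ∧
      ∃ h' : N' →ₗ[A] M, ∀ x : N', K.mkQ (x : N) = f (h' x))

/-- `M` is almost projective: almost `N`-projective for every module `N`. -/
def IsAlmostProjective (M : Type w) [AddCommGroup M] [Module A M] : Prop :=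
  ∀ (N : Type v) [AddCommGroup N] [Module A N], AlmostNProjective A M N

/-- `M` is almost `N`-injective. -/
def AlmostNInjective (M : Type v) (N : Type w) [AddCommGroup M] [Module A M]
    [AddCommGroup N] [Module A N] : Prop :=
  ∀ (N₀ : Submodule A N) (f : N₀ →ₗ[A] M),
    (∃ g : N →ₗ[A] M, ∀ x : N₀, g (x : N) = f x) ∨
    (∃ π : Module.End A N, IsIdempotentElem π ∧ π ≠ 0 ∧
      ∃ h : M →ₗ[A] LinearMap.range π, ∀ x : N₀, (↑(h (f x)) : N) = π (x : N))

/-- `M` is almost injective: almost `N`-injective for every module `N`. -/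
def IsAlmostInjective (M : Type w) [AddCommGroup M] [Module A M] : Prop :=
  ∀ (N : Type v) [AddCommGroup N] [Module A N], AlmostNInjective A M N

/-- `N` belongs to `σ(M)`: `N` is isomorphic to a submodule of a quotient of a direct sum
of copies of `M`. -/
def InSigma (M : Type v) [AddCommGroup M] [Module A M]
    (N : Type w) [AddCommGroup N] [Module A N] : Prop :=
  ∃ (ι : Type v) (K : Submodule A (ι →₀ M)) (P : Submodule A ((ι →₀ M) ⧸ K)),
    Nonempty (N ≃ₗ[A] P)

/-- `P` is a projective object of the category `σ(M)`. -/
def ProjInSigma (M : Type v) [AddCommGroup M] [Module A M]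
    (P : Type w) [AddCommGroup P] [Module A P] : Prop :=
  InSigma A M P ∧
  ∀ (X Y : Type v) [AddCommGroup X] [Module A X] [AddCommGroup Y] [Module A Y],
    InSigma A M X → InSigma A M Y →
    ∀ (g : X →ₗ[A] Y), Function.Surjective g →
    ∀ f : P →ₗ[A] Y, ∃ h : P →ₗ[A] X, ∀ x : P, g (h x) = f x

/-- `M` is an almost `V`-module: every simple module is almost `N`-injective
for every `N ∈ σ(M)`. -/
def IsAlmostVModule (M : Type v) [AddCommGroup M] [Module A M] : Prop :=
  ∀ (S : Type v) [AddCommGroup S] [Module A S], IsSimpleModule A S →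
    ∀ (N : Type v) [AddCommGroup N] [Module A N], InSigma A M N → AlmostNInjective A S N

end Defs

namespace AI
open Submodule

section basics
variable {R : Type u} [CommRing R] {M : Type v} [AddCommGroup M] [Module R M]

/-- complements in a semisimple submodule -/
theorem ss_compl {S T : Submodule R M} (hS : IsSemisimpleModule R S) (hT : T ≤ S) :
    ∃ D ≤ S, T ⊓ D = ⊥ ∧ T ⊔ D = S := by
  obtain ⟨D, hD⟩ := exists_isCompl (T.comap S.subtype)
  refine ⟨D.map S.subtype, map_subtype_le _ _, ?_, ?_⟩
  · have h := congrArg (Submodule.map S.subtype) hD.inf_eq_bot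
    rw [Submodule.map_inf _ S.subtype_injective, map_comap_subtype, Submodule.map_bot,
      inf_eq_right.2 hT] at h
    exact h
  · have h := congrArg (Submodule.map S.subtype) hD.sup_eq_top
    rw [Submodule.map_sup, map_comap_subtype, inf_eq_right.2 hT, Submodule.map_top,
      range_subtype] at h
    exact h

theorem ss_of_compl {S : Submodule R M}
    (h : ∀ T ≤ S, ∃ D ≤ S, T ⊓ D = ⊥ ∧ T ⊔ D = S) : IsSemisimpleModule R S := by
  rw [isSemisimpleModule_iff]
  refine ⟨fun T => ?_⟩
  obtain ⟨D, hD, h1, h2⟩ := h (T.map S.subtype) (map_subtype_le _ _)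
  refine ⟨D.comap S.subtype, ?_⟩
  rw [isCompl_iff, disjoint_iff, codisjoint_iff]
  constructor
  · apply Submodule.map_injective_of_injective S.subtype_injective
    rw [Submodule.map_inf _ S.subtype_injective, map_comap_subtype, inf_eq_right.2 hD, h1,
      Submodule.map_bot]
  · apply Submodule.map_injective_of_injective S.subtype_injective
    rw [Submodule.map_sup, map_comap_subtype, inf_eq_right.2 hD, h2, Submodule.map_top,
      range_subtype]

/-- complements in a quotient whose submodule is semisimple -/
theorem ssq_compl {A B T : Submodule R M} (hS : IsSemisimpleModule R (B.map A.mkQ))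
    (h1 : A ≤ T) (h2 : T ≤ B) :
    ∃ D, A ≤ D ∧ D ≤ B ∧ T ⊓ D = A ∧ T ⊔ D = B := by
  have hk : ∀ X : Submodule R M, A ≤ X → (X.map A.mkQ).comap A.mkQ = X := fun X hX => by
    rw [comap_map_eq, ker_mkQ, sup_eq_left.2 hX]
  obtain ⟨D, hD, h3, h4⟩ := ss_compl hS (Submodule.map_mono (f := A.mkQ) h2)
  have hAD : A ≤ D.comap A.mkQ := by
    intro x hx; rw [mem_comap, mkQ_apply, (Submodule.Quotient.mk_eq_zero A).2 hx]; exact D.zero_mem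
  have hmd : (D.comap A.mkQ).map A.mkQ = D := map_comap_eq_of_surjective A.mkQ_surjective D
  refine ⟨D.comap A.mkQ, hAD, ?_, ?_, ?_⟩
  · rw [← hk B (h1.trans h2)]; exact comap_mono hD
  · rw [← hk T h1, ← comap_inf, h3]
    change LinearMap.ker A.mkQ = A
    exact ker_mkQ A
  · rw [← hk (T ⊔ _) (h1.trans le_sup_left), Submodule.map_sup, hmd, h4, hk B (h1.trans h2)]

theorem map_mkQ_top (A : Submodule R M) : (⊤ : Submodule R M).map A.mkQ = ⊤ := by
  rw [Submodule.map_top, range_mkQ]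

theorem ssq_top_iff {A : Submodule R M} : IsSemisimpleModule R ((⊤ : Submodule R M).map A.mkQ)
    ↔ IsSemisimpleModule R (M ⧸ A) := by
  rw [map_mkQ_top]
  exact LinearEquiv.isSemisimpleModule_iff Submodule.topEquiv

theorem ssq_compl_top {A T : Submodule R M} (hS : IsSemisimpleModule R (M ⧸ A))
    (h1 : A ≤ T) : ∃ D, A ≤ D ∧ T ⊓ D = A ∧ T ⊔ D = ⊤ := by
  obtain ⟨D, a, b, c, d⟩ := ssq_compl (ssq_top_iff.2 hS) h1 le_top
  exact ⟨D, a, c, d⟩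

theorem ssq_of_compl_top {A : Submodule R M}
    (h : ∀ T, A ≤ T → ∃ D, A ≤ D ∧ T ⊓ D ≤ A ∧ T ⊔ D = ⊤) : IsSemisimpleModule R (M ⧸ A) := by
  rw [isSemisimpleModule_iff]
  refine ⟨fun T => ?_⟩
  have hAX : ∀ X : Submodule R (M ⧸ A), A ≤ X.comap A.mkQ := fun X => by
    intro x hx; rw [mem_comap, mkQ_apply, (Submodule.Quotient.mk_eq_zero A).2 hx]; exact X.zero_mem
  obtain ⟨D, hD, h1, h2⟩ := h _ (hAX T)
  have hk : ∀ X : Submodule R M, A ≤ X → (X.map A.mkQ).comap A.mkQ = X := fun X hX => by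
    rw [comap_map_eq, ker_mkQ, sup_eq_left.2 hX]
  have hinj := comap_injective_of_surjective A.mkQ_surjective
  refine ⟨D.map A.mkQ, ?_⟩
  rw [isCompl_iff, disjoint_iff, codisjoint_iff]
  constructor
  · apply hinj
    rw [comap_inf, hk D hD]
    change _ = LinearMap.ker A.mkQ
    rw [ker_mkQ]
    exact le_antisymm h1 (le_inf (hAX T) hD)
  · have := congrArg (Submodule.map A.mkQ) h2
    rw [Submodule.map_sup, map_comap_eq_of_surjective A.mkQ_surjective, map_mkQ_top] at this
    exact this

theorem ss_of_killed {m : Ideal R} (hm : m.IsMaximal) (h : ∀ x : M, ∀ μ ∈ m, μ • x = 0) :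
    IsSemisimpleModule R M := by
  have ht : Module.IsTorsionBySet R M (m : Set R) := fun x a => h x a a.2
  let := ht.module
  let := Ideal.Quotient.field m
  exact ht.isSemisimpleModule_iff.1 inferInstance

/-- elements killed by `m` -/
def tor (m : Ideal R) (M : Type v) [AddCommGroup M] [Module R M] : Submodule R M :=
  Submodule.torsionBySet R M (m : Set R)

theorem mem_tor {m : Ideal R} {x : M} : x ∈ tor m M ↔ ∀ μ ∈ m, μ • x = 0 := by
  rw [tor, Submodule.mem_torsionBySet_iff]; exact ⟨fun h μ hμ => h ⟨μ, hμ⟩, fun h a => h a a.2⟩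

/-- the socle -/
def socl (R : Type u) [CommRing R] (M : Type v) [AddCommGroup M] [Module R M] : Submodule R M :=
  ⨆ m : {m : Ideal R // m.IsMaximal}, tor m.1 M

theorem tor_le_socl {m : Ideal R} (hm : m.IsMaximal) : tor m M ≤ socl R M :=
  le_iSup (fun m : {m : Ideal R // m.IsMaximal} => tor m.1 M) ⟨m, hm⟩

theorem tor_ss {m : Ideal R} (hm : m.IsMaximal) : IsSemisimpleModule R (tor m M) :=
  ss_of_killed hm fun x μ hμ => Subtype.ext (mem_tor.1 x.2 μ hμ)

theorem socl_ss : IsSemisimpleModule R (socl R M) := by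
  have := isSemisimpleModule_biSup_of_isSemisimpleModule_submodule (s := Set.univ)
    (p := fun m : {m : Ideal R // m.IsMaximal} => tor m.1 M) (fun m _ => tor_ss m.2)
  rw [socl, ← iSup_univ]; exact this

theorem ann_of_simple {N : Submodule R M} (h : IsSimpleModule R N) :
    ∃ m : Ideal R, m.IsMaximal ∧ N ≤ tor m M := by
  refine ⟨Module.annihilator R N, IsSimpleModule.annihilator_isMaximal, fun x hx => ?_⟩
  rw [mem_tor]
  intro μ hμ
  exact congrArg Subtype.val (Module.mem_annihilator.1 hμ ⟨x, hx⟩)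

theorem ss_le_socl {N : Submodule R M} (h : IsSemisimpleModule R N) : N ≤ socl R M := by
  have h1 := IsSemisimpleModule.sSup_simples_eq_top R N
  have h2 := congrArg (Submodule.map N.subtype) h1
  rw [Submodule.map_top, range_subtype, sSup_eq_iSup', Submodule.map_iSup] at h2
  rw [← h2]
  refine iSup_le fun s => ?_
  have : IsSimpleModule R s.1 := s.2
  have h3 : IsSimpleModule R (s.1.map N.subtype) :=
    IsSimpleModule.congr (s.1.equivMapOfInjective _ N.subtype_injective).symm
  obtain ⟨m, hm, hle⟩ := ann_of_simple h3
  exact hle.trans (tor_le_socl hm)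

end basics
end AI

namespace AI
open Submodule

section ext
variable {R : Type u} [CommRing R] {M : Type v} [AddCommGroup M] [Module R M]
  {Y : Type w} [AddCommGroup Y] [Module R Y]

theorem zext (f0 : Y →ₗ.[R] M)
    (h : ∀ f : Y →ₗ.[R] M, f0 ≤ f → f.domain ≠ ⊤ → ∃ y, y ∉ f.domain ∧ ∃ v : M,
      ∀ (r : R) (hr : r • y ∈ f.domain), f ⟨r • y, hr⟩ = r • v) :
    ∃ g : Y →ₗ[R] M, ∀ x : f0.domain, g x = f0 x := by
  obtain ⟨f, hf0, hmax⟩ := zorn_le_nonempty₀ (Set.univ : Set (Y →ₗ.[R] M))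
    (fun c _ hc y hy => ⟨LinearPMap.sSup c hc.directedOn, trivial,
      fun z hz => LinearPMap.le_sSup hc.directedOn hz⟩) f0 trivial
  have htop : f.domain = ⊤ := by
    by_contra hne
    obtain ⟨y, hy, v, hv⟩ := h f hf0 hne
    have H : ∀ c : R, c • y = 0 → c • v = 0 := by
      intro c hc
      have h0 : c • y ∈ f.domain := by rw [hc]; exact f.domain.zero_mem
      rw [← hv c h0]
      have : (⟨c • y, h0⟩ : f.domain) = 0 := Subtype.ext hc
      rw [this, LinearPMap.map_zero]
    obtain ⟨p, hp⟩ : ∃ p : Y →ₗ.[R] M, p = LinearPMap.mkSpanSingleton' y v H := ⟨_, rfl⟩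
    have hcomp : ∀ (x : f.domain) (z : p.domain), (x : Y) = z → f x = p z := by
      subst hp
      rintro ⟨x, hx⟩ ⟨z, hz⟩ hxz
      obtain ⟨r, rfl⟩ := mem_span_singleton.1 hz
      simp only at hxz
      subst hxz
      rw [hv, LinearPMap.mkSpanSingleton'_apply, RingHom.id_apply]
    have h1 := hmax.le_of_ge (y := f.sup _ hcomp) trivial (LinearPMap.left_le_sup _ _ _)
    apply hy
    apply h1.1
    refine (LinearPMap.right_le_sup f _ hcomp).1 ?_
    rw [hp]
    exact mem_span_singleton_self y
  refine ⟨f.toFun ∘ₗ (LinearMap.id.codRestrict f.domain fun x => htop ▸ mem_top), fun x => ?_⟩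
  exact (hf0.2 (by rfl)).symm

theorem ext_soc (f : Y →ₗ.[R] M) : ∃ f' : Y →ₗ.[R] M, f ≤ f' ∧ socl R Y ≤ f'.domain := by
  obtain ⟨D, hD, h1, h2⟩ := ss_compl (socl_ss (R := R) (M := Y))
    (inf_le_right : f.domain ⊓ socl R Y ≤ socl R Y)
  have hdis : Disjoint f.domain (⟨D, 0⟩ : Y →ₗ.[R] M).domain := by
    rw [disjoint_iff, eq_bot_iff, ← h1]
    exact le_inf (le_inf inf_le_left (inf_le_right.trans hD)) inf_le_right
  have hc := LinearPMap.sup_h_of_disjoint f (⟨D, 0⟩ : Y →ₗ.[R] M) hdis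
  refine ⟨f.sup ⟨D, 0⟩ hc, LinearPMap.left_le_sup _ _ _, ?_⟩
  rw [LinearPMap.domain_sup, ← h2]
  exact sup_le_sup_right inf_le_left _

def Pur (m : Ideal R) : Prop := ∀ x ∈ m, ∃ r ∈ m, r * x = x

def Thr (m : Ideal R) : Prop := ∃ e a : R, e * e = e ∧ e ∉ m ∧ a ∈ m ∧ a ≠ 0 ∧ e * a = a ∧
  (∀ z ∈ m, z * a = 0) ∧ ∀ z ∈ m, ∃ r, e * z = r * a

def C3 (S : Ideal R) : Prop := IsSemisimpleModule R S ∧ IsSemisimpleModule R (R ⧸ S) ∧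
  ∀ m : Ideal R, m.IsMaximal → Pur m ∨ (S ≤ m ∧ Thr m)

theorem exists_rho {S : Ideal R} (hS : IsSemisimpleModule R (R ⧸ S)) (m : Ideal R) :
    ∃ ρ ∈ m, ∀ μ ∈ m, (1 - ρ) * μ ∈ S := by
  obtain ⟨D, h0, h1, h2⟩ := ssq_compl_top hS (le_sup_right : S ≤ m ⊔ S)
  have h1' : (1 : R) ∈ (m ⊔ S) ⊔ D := by rw [h2]; trivial
  obtain ⟨x, hx, d, hd, hxd⟩ := mem_sup.1 h1'
  obtain ⟨ρ, hρ, s, hs, rfl⟩ := mem_sup.1 hx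
  refine ⟨ρ, hρ, fun μ hμ => ?_⟩
  have : (1 - ρ) * μ = s * μ + d * μ := by rw [← hxd]; ring
  rw [this]
  refine S.add_mem (S.mul_mem_right _ hs) ?_
  rw [← h1]
  exact ⟨mem_sup_left (Ideal.mul_mem_left m _ hμ), Ideal.mul_mem_right _ D hd⟩

theorem map_ss {P : Type*} [AddCommGroup P] [Module R P] (f : M →ₗ[R] P) {S : Submodule R M} (hS : IsSemisimpleModule R S) :
    IsSemisimpleModule R (S.map f) :=
  IsSemisimpleModule.of_surjective (f.submoduleMap S) (f.submoduleMap_surjective S)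

theorem smul_soc {S : Ideal R} (hS : IsSemisimpleModule R S) {s : R} (hs : s ∈ S) (y : Y) :
    s • y ∈ socl R Y :=
  ss_le_socl (map_ss (LinearMap.toSpanSingleton R Y y) hS) ⟨s, hs, rfl⟩

theorem one_sub_mem {m : Ideal R} (hm : m.IsMaximal) {e : R} (he : e * e = e) (h : e ∉ m) :
    1 - e ∈ m := by
  have : e * (1 - e) ∈ m := by rw [mul_sub, mul_one, he, sub_self]; exact m.zero_mem
  exact (hm.isPrime.mem_or_mem this).resolve_left h

theorem one_sub_notMem {m : Ideal R} (hm : m.IsMaximal) {e : R} (h : e ∈ m) : 1 - e ∉ m := by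
  intro h'
  exact hm.ne_top ((Ideal.eq_top_iff_one m).2 (by simpa using m.add_mem h' h))

theorem thr_smul {m : Ideal R} {e a : R} (h : ∀ z ∈ m, ∃ r, e * z = r * a) {x : M}
    (hx : x ∈ m • (⊤ : Submodule R M)) : ∃ w : M, e • x = a • w := by
  refine Submodule.smul_induction_on hx (fun z hz n _ => ?_) ?_
  · obtain ⟨r, hr⟩ := h z hz
    exact ⟨r • n, by rw [smul_smul, hr, mul_comm, mul_smul]⟩
  · rintro x y ⟨w, hw⟩ ⟨w', hw'⟩
    exact ⟨w + w', by rw [smul_add, smul_add, hw, hw']⟩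

theorem pur_smul {m : Ideal R} (h : Pur m) {x : M}
    (hx : x ∈ m • (⊤ : Submodule R M)) : ∃ r ∈ m, r • x = x := by
  refine Submodule.smul_induction_on hx (fun z hz n _ => ?_) ?_
  · obtain ⟨r, hr, hr'⟩ := h z hz
    exact ⟨r, hr, by rw [smul_smul, hr']⟩
  · rintro x y ⟨w, hw, hx⟩ ⟨w', hw', hy⟩
    refine ⟨w + w' - w * w', m.sub_mem (m.add_mem hw hw') (m.mul_mem_left _ hw'), ?_⟩
    have e1 : (w + w' - w * w') • x = x := by
      have : (w + w' - w * w') • x = w • x + w' • x - w' • w • x := by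
        rw [smul_smul, mul_comm w' w]; module
      rw [this, hx]; abel
    have e2 : (w + w' - w * w') • y = y := by
      have : (w + w' - w * w') • y = w • y + w' • y - w • w' • y := by
        rw [smul_smul]; module
      rw [this, hy]; abel
    rw [smul_add, e1, e2]

theorem ext_thm {S : Ideal R} (hC : C3 S) (f0 : Y →ₗ.[R] M) (hsoc : socl R Y ≤ f0.domain)
    (hP : ∀ m : Ideal R, m.IsMaximal → ∀ u : f0.domain, (u : Y) ∈ tor m Y →
      (¬ S ≤ m → f0 u = 0) ∧ (¬ Pur m → f0 u ∈ m • (⊤ : Submodule R M))) :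
    ∃ g : Y →ₗ[R] M, ∀ x : f0.domain, g x = f0 x := by
  obtain ⟨hS, hRS, hm3⟩ := hC
  refine zext f0 fun f hf0 hne => ?_
  replace hP : ∀ m : Ideal R, m.IsMaximal → ∀ u : f.domain, (u : Y) ∈ tor m Y →
      (¬ S ≤ m → f u = 0) ∧ (¬ Pur m → f u ∈ m • (⊤ : Submodule R M)) := by
    intro m hm u hu
    have h1 := hP m hm ⟨u, hsoc (tor_le_socl hm hu)⟩ hu
    rw [hf0.2 (y := u) rfl] at h1
    exact h1
  replace hsoc := hsoc.trans hf0.1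
  obtain ⟨y, -, hy⟩ := SetLike.exists_of_lt (lt_top_iff_ne_top.2 hne)
  set I : Ideal R := f.domain.comap (LinearMap.toSpanSingleton R Y y) with hI
  have hI' : ∀ r, r ∈ I ↔ r • y ∈ f.domain := fun r => Iff.rfl
  obtain ⟨m, hm, hIm⟩ := Ideal.exists_le_maximal I (fun h => hy (by
    have : (1 : R) ∈ I := by rw [h]; trivial
    simpa [hI'] using this))
  obtain ⟨ρ, hρ, hρS⟩ := exists_rho hRS m
  have hρ' := one_sub_notMem hm hρ
  obtain ⟨y0, hy0⟩ : ∃ y0, y0 = (1 - ρ) • y := ⟨_, rfl⟩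
  have hmy0 : ∀ μ ∈ m, μ • y0 ∈ socl R Y := by
    intro μ hμ
    rw [hy0, smul_smul, mul_comm]
    exact smul_soc hS (hρS μ hμ) y
  have hdom : ∀ c, c • y0 ∈ f.domain → c ∈ m := by
    intro c hc
    rw [hy0, smul_smul] at hc
    exact (hm.isPrime.mem_or_mem (hIm ((hI' _).2 hc))).resolve_right hρ'
  by_cases hpur : Pur m
  · refine ⟨(1 - ρ) • y0, fun h => hρ' (hdom _ h), 0, fun r hr => ?_⟩
    rw [smul_zero]
    have hrm : r ∈ m := by
      rw [smul_smul] at hr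
      exact (hm.isPrime.mem_or_mem (hdom _ hr)).resolve_right hρ'
    set K : Submodule R Y := (LinearMap.ker f.toFun).map f.domain.subtype with hK
    have hK' : ∀ x (hx : x ∈ f.domain), x ∈ K ↔ f ⟨x, hx⟩ = 0 := by
      intro x hx
      constructor
      · rintro ⟨z, hz, rfl⟩; exact hz
      · intro h; exact ⟨⟨x, hx⟩, h, rfl⟩
    have key : socl R Y ≤ (K ⊔ tor m Y).comap (LinearMap.lsmul R Y (1 - ρ)) := by
      refine iSup_le ?_
      rintro ⟨n, hn⟩ t ht
      simp only at ht
      have htd : t ∈ f.domain := hsoc (tor_le_socl hn ht)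
      rw [mem_comap, LinearMap.lsmul_apply]
      by_cases hnm : n = m
      · subst hnm
        exact mem_sup_right (smul_mem _ _ ht)
      · by_cases hSn : S ≤ n
        · have : ¬ m ≤ n := fun h => hnm (hm.eq_of_le hn.ne_top h).symm
          obtain ⟨μ, hμ, hμn⟩ := SetLike.not_le_iff_exists.1 this
          have := (hn.isPrime.mem_or_mem (hSn (hρS μ hμ))).resolve_right hμn
          rw [mem_tor.1 ht _ this]
          exact zero_mem _
        · exact mem_sup_left (smul_mem _ _ ((hK' t htd).2 ((hP n hn ⟨t, htd⟩ ht).1 hSn)))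
    rw [← hK']
    obtain ⟨k, hk, τ, hτ, hkt⟩ := mem_sup.1 (key (hmy0 r hrm))
    rw [LinearMap.lsmul_apply] at hkt
    obtain ⟨r', hr', hrr⟩ := hpur r hrm
    have : r • (1 - ρ) • y0 = r' • k := by
      have h2 : r • (1 - ρ) • y0 = r' • (1 - ρ) • r • y0 := by
        conv_lhs => rw [← hrr]
        module
      rw [h2, ← hkt, smul_add, mem_tor.1 hτ r' hr', add_zero]
    rw [this]
    exact K.smul_mem _ hk
  · obtain ⟨-, e, a, hee, hem, ham, ha0, hea, hza, hez⟩ := (hm3 m hm).resolve_left hpur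
    have had : a • y0 ∈ f.domain := hsoc (hmy0 a ham)
    have hfa := (hP m hm ⟨a • y0, had⟩ (mem_tor.2 fun μ hμ => by
      rw [smul_smul, hza μ hμ, zero_smul])).2 hpur
    obtain ⟨w, hw⟩ := thr_smul hez hfa
    have hw' : f ⟨a • y0, had⟩ = a • w := by
      rw [← hw, ← LinearPMap.map_smul]
      congr 1
      apply Subtype.ext
      change a • y0 = e • a • y0
      rw [smul_smul, hea]
    refine ⟨e • y0, fun h => hem (hdom _ h), e • w, fun c hc => ?_⟩
    have hcm : c ∈ m := by
      rw [smul_smul] at hc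
      exact (hm.isPrime.mem_or_mem (hdom _ hc)).resolve_right hem
    obtain ⟨r, hr⟩ := hez c hcm
    have : (⟨c • e • y0, hc⟩ : f.domain) = r • ⟨a • y0, had⟩ := by
      apply Subtype.ext
      change c • e • y0 = r • a • y0
      rw [smul_smul, mul_comm, hr, mul_smul]
    rw [this, LinearPMap.map_smul, hw', smul_smul, smul_smul, mul_comm c, hr]

end ext
end AI

namespace AI
open Submodule

section alm
variable {R : Type u} [CommRing R] {M : Type v} [AddCommGroup M] [Module R M]
  {Y : Type w} [AddCommGroup Y] [Module R Y]

theorem ss_quot_smul {m : Ideal R} (hm : m.IsMaximal) :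
    IsSemisimpleModule R (Y ⧸ (m • (⊤ : Submodule R Y))) := by
  refine ss_of_killed hm fun x μ hμ => ?_
  obtain ⟨y, rfl⟩ := Submodule.mkQ_surjective _ x
  rw [← map_smul, mkQ_apply, Submodule.Quotient.mk_eq_zero]
  exact smul_mem_smul hμ mem_top

theorem ss_ext {P : Type*} [AddCommGroup P] [Module R P] {m : Ideal R} (hm : m.IsMaximal)
    {X : Submodule R Y} (f : X →ₗ[R] P)
    (hf : ∀ x : X, (x : Y) ∈ m • (⊤ : Submodule R Y) → f x = 0) :
    ∃ g : Y →ₗ[R] P, ∀ x : X, g x = f x := by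
  have := ss_quot_smul (Y := Y) hm
  let ι : X →ₗ[R] (Y ⧸ (m • (⊤ : Submodule R Y))) := (mkQ _) ∘ₗ X.subtype
  have hk : LinearMap.ker ι ≤ LinearMap.ker f := by
    intro x hx
    apply hf
    exact (Submodule.Quotient.mk_eq_zero _).1 hx
  obtain ⟨h, hh⟩ := IsSemisimpleModule.extension_property ((LinearMap.ker ι).liftQ ι le_rfl)
    (LinearMap.ker_eq_bot.1 (ker_liftQ_eq_bot _ _ _ le_rfl)) ((LinearMap.ker ι).liftQ f hk)
  refine ⟨h ∘ₗ mkQ _, fun x => ?_⟩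
  have := LinearMap.congr_fun hh ((LinearMap.ker ι).mkQ x)
  simpa [ι] using this

theorem inv_mod {m : Ideal R} (hm : m.IsMaximal) {c : R} (hc : c ∉ m) :
    ∃ r, ∃ μ ∈ m, r * c + μ = 1 := by
  obtain ⟨r, i, hi, h⟩ := hm.exists_inv hc
  exact ⟨r, i, hi, h⟩

theorem mem_of_smul {m : Ideal R} (hm : m.IsMaximal) {c : R} (hc : c ∉ m) {N : Submodule R M}
    {z : M} (hz : ∀ μ ∈ m, μ • z ∈ N) (h : c • z ∈ N) : z ∈ N := by
  obtain ⟨r, μ, hμ, h1⟩ := inv_mod hm hc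
  rw [← one_smul R z, ← h1, add_smul, mul_smul]
  exact N.add_mem (N.smul_mem _ h) (hz μ hμ)

theorem hmap {m : Ideal R} (hm : m.IsMaximal) {z : M} (hz : z ∈ tor m M)
    (hz' : z ∉ m • (⊤ : Submodule R M)) {u : Y} (hu : u ∈ tor m Y) :
    ∃ h : M →ₗ[R] Y, h z = u ∧ (∀ x, h x ∈ span R {u}) ∧
      ∀ x ∈ m • (⊤ : Submodule R M), h x = 0 := by
  have H : ∀ c : R, c • z ∈ m • (⊤ : Submodule R M) → c ∈ m := by
    intro c hc
    by_contra hcm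
    exact hz' (mem_of_smul hm hcm (fun μ hμ => smul_mem_smul hμ mem_top) hc)
  let u' : span R {u} := ⟨u, mem_span_singleton_self u⟩
  have hu' : ∀ μ ∈ m, ∀ x : span R {u}, μ • x = 0 := by
    rintro μ hμ ⟨x, hx⟩
    obtain ⟨c, rfl⟩ := mem_span_singleton.1 hx
    apply Subtype.ext
    change μ • c • u = 0
    rw [smul_comm, mem_tor.1 hu μ hμ, smul_zero]
  have H1 : ∀ c : R, c • z = 0 → c • u' = 0 := fun c hc =>
    hu' c (H c (by rw [hc]; exact zero_mem _)) u'
  let p : M →ₗ.[R] span R {u} := LinearPMap.mkSpanSingleton' z u' H1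
  have hp : ∀ (c : R) (hc : c • z ∈ p.domain), p ⟨c • z, hc⟩ = c • u' := fun c hc =>
    LinearPMap.mkSpanSingleton'_apply z u' H1 c hc
  obtain ⟨g, hg⟩ := ss_ext hm p.toFun (by
    rintro ⟨x, hx⟩ hxm
    obtain ⟨c, rfl⟩ := mem_span_singleton.1 hx
    change p _ = 0
    rw [hp]
    exact hu' c (H c hxm) u')
  have hzd : z ∈ p.domain := mem_span_singleton_self z
  refine ⟨(span R {u}).subtype ∘ₗ g, ?_, fun x => (g x).2, ?_⟩
  · have h1 := hg ⟨z, hzd⟩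
    have h2 := hp 1 (by rwa [one_smul])
    simp only [one_smul] at h2
    rw [LinearMap.comp_apply, h1]
    change (span R {u}).subtype (p _) = u
    rw [h2]
    rfl
  · intro x hx
    have hgm : ∀ x ∈ m • (⊤ : Submodule R M), g x = 0 := fun x hx => by
      refine Submodule.smul_induction_on hx (fun μ hμ n _ => ?_) (fun x y hx hy => ?_)
      · rw [map_smul]; exact hu' μ hμ _
      · rw [map_add, hx, hy, add_zero]
    rw [LinearMap.comp_apply, hgm x hx, map_zero]

theorem alm_finish {X : Submodule R Y} (f : X →ₗ[R] M) (h : M →ₗ[R] Y) (π : Module.End R Y)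
    (hπ : ∀ y, π (π y) = π y) (hπ0 : π ≠ 0) (hh : ∀ x, π (h x) = h x)
    (hf : ∀ x : X, h (f x) = π x) :
    ∃ π : Module.End R Y, IsIdempotentElem π ∧ π ≠ 0 ∧
      ∃ h : M →ₗ[R] LinearMap.range π, ∀ x : X, (↑(h (f x)) : Y) = π (x : Y) :=
  ⟨π, LinearMap.ext hπ, hπ0, h.codRestrict _ (fun x => ⟨h x, hh x⟩), fun x => hf x⟩

theorem thr_not_pur {m : Ideal R} (h : Thr m) : ¬ Pur m := by
  obtain ⟨e, a, -, -, ham, ha0, -, hza, -⟩ := h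
  intro hp
  obtain ⟨r, hr, hra⟩ := hp a ham
  exact ha0 (by rw [← hra, hza r hr])

theorem killed_two {m n : Ideal R} (hm : m.IsMaximal) (hn : n.IsMaximal) (hne : n ≠ m) {x : M}
    (h1 : x ∈ tor m M) (h2 : x ∈ tor n M) : x = 0 := by
  have : ¬ n ≤ m := fun h => hne (hn.eq_of_le hm.ne_top h)
  obtain ⟨μ, hμ, hμn⟩ := SetLike.not_le_iff_exists.1 this
  exact (Submodule.mem_bot R).1 (mem_of_smul (N := ⊥) hm hμn
    (fun μ hμ => by rw [mem_tor.1 h1 μ hμ]; exact zero_mem _)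
    (by rw [mem_tor.1 h2 μ hμ]; exact zero_mem _))

theorem alm_of_C3 {S : Ideal R} (hC : C3 S) : AlmostNInjective R M Y := by
  intro X0 f0
  obtain ⟨F, hF0, hsoc⟩ := ext_soc (⟨X0, f0⟩ : Y →ₗ.[R] M)
  suffices H : (∃ g : Y →ₗ[R] M, ∀ x : F.domain, g x = F x) ∨
      ∃ (h : M →ₗ[R] Y) (π : Module.End R Y), (∀ y, π (π y) = π y) ∧ π ≠ 0 ∧
        (∀ x, π (h x) = h x) ∧ ∀ x : F.domain, h (F x) = π x by
    have hx : ∀ x : X0, f0 x = F ⟨x, hF0.1 x.2⟩ := fun x => hF0.2 (by rfl)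
    rcases H with ⟨g, hg⟩ | ⟨h, π, h1, h2, h3, h4⟩
    · exact Or.inl ⟨g, fun x => by rw [hx, ← hg]⟩
    · exact Or.inr (alm_finish f0 h π h1 h2 h3 fun x => by rw [hx, h4])
  have hC' := hC
  obtain ⟨hS, hRS, hm3⟩ := hC'
  by_cases hA : ∀ m : Ideal R, m.IsMaximal → ∀ u : F.domain, (u : Y) ∈ tor m Y →
      F u ∈ m • (⊤ : Submodule R M)
  · left
    refine ext_thm hC F hsoc fun m hm u hu => ⟨fun hSm => ?_, fun _ => hA m hm u hu⟩
    have hp : Pur m := (hm3 m hm).resolve_right fun h => hSm h.1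
    obtain ⟨r, hr, hru⟩ := pur_smul hp (hA m hm u hu)
    rw [← hru, ← LinearPMap.map_smul]
    have : r • u = 0 := Subtype.ext (mem_tor.1 hu r hr)
    rw [this, LinearPMap.map_zero]
  right
  have htF : ∀ (m : Ideal R) (u : F.domain), (u : Y) ∈ tor m Y → F u ∈ tor m M := by
    intro m u hu
    rw [mem_tor]
    intro μ hμ
    rw [← LinearPMap.map_smul]
    have : μ • u = 0 := Subtype.ext (mem_tor.1 hu μ hμ)
    rw [this, LinearPMap.map_zero]
  have hspan : ∀ (m : Ideal R) (u : Y), u ∈ tor m Y → ∀ x ∈ span R {u}, x ∈ tor m Y :=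
    fun m u hu x hx => (span_singleton_le_iff_mem u _).2 hu hx
  by_cases hB : ∃ m : Ideal R, m.IsMaximal ∧ Thr m ∧ ∃ u : F.domain, (u : Y) ∈ tor m Y ∧
      F u ∉ m • (⊤ : Submodule R M) ∧ (u : Y) ∈ m • (⊤ : Submodule R Y)
  · obtain ⟨m, hm, hthr, ⟨u, hud⟩, hu, hFu, hum⟩ := hB
    simp only at hu hum
    have hnp := thr_not_pur hthr
    have hSm : S ≤ m := ((hm3 m hm).resolve_left hnp).1
    obtain ⟨e, a, hee, hem, ham, ha0, hea, hza, hez⟩ := hthr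
    have h1e := one_sub_mem hm hee hem
    obtain ⟨y, hy⟩ := thr_smul hez hum
    have hu0 : u ≠ 0 := by
      rintro rfl
      apply hFu
      have : (⟨0, hud⟩ : F.domain) = 0 := rfl
      rw [this, LinearPMap.map_zero]
      exact zero_mem _
    have heu : e • u = u := by
      have := mem_tor.1 hu _ h1e
      rw [sub_smul, one_smul, sub_eq_zero] at this
      exact this.symm
    have huy : u = a • e • y := by
      rw [smul_smul, mul_comm, hea, ← hy, heu]
    obtain ⟨h, hhu, hhs, -⟩ := hmap hm (htF m ⟨u, hud⟩ hu) hFu hu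
    set P := span R {e • y} with hP
    have huP : span R {u} ≤ P := (span_singleton_le_iff_mem _ _).2
      (by rw [huy]; exact P.smul_mem _ (mem_span_singleton_self _))
    let h' : M →ₗ[R] P := h.codRestrict P fun x => huP (hhs x)
    let F' : Y →ₗ.[R] P := ⟨F.domain, h' ∘ₗ F.toFun⟩
    have hF' : ∀ x : F.domain, ((F' x : P) : Y) = h (F x) := fun x => rfl
    obtain ⟨π0, hπ0⟩ := ext_thm hC F' hsoc (by
      intro n hn t ht
      by_cases hnm : n = m
      · subst hnm
        refine ⟨fun h => absurd hSm h, fun _ => ?_⟩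
        obtain ⟨c, hc⟩ := mem_span_singleton.1 (hhs (F t))
        have : F' t = a • c • (⟨e • y, mem_span_singleton_self _⟩ : P) := by
          apply Subtype.ext
          rw [hF', ← hc, huy]
          change c • a • e • y = a • c • e • y
          rw [smul_comm]
        rw [this]
        exact smul_mem_smul ham mem_top
      · have : F' t = 0 := by
          apply Subtype.ext
          rw [hF']
          refine killed_two hm hn hnm (hspan m u hu _ (hhs _)) ?_
          rw [mem_tor]
          intro μ hμ
          rw [← map_smul, mem_tor.1 (htF n t ht) μ hμ, map_zero]
        rw [this]
        exact ⟨fun _ => rfl, fun _ => zero_mem _⟩)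
    have hπ0' : ∀ x : F.domain, (π0 x : Y) = h (F x) := fun x => by
      rw [← hF']; exact congrArg Subtype.val (hπ0 x)
    obtain ⟨w, hw⟩ := mem_span_singleton.1 (π0 (e • y)).2
    have hwu : w • u = u := by
      have h1 : (π0 u : Y) = u := by
        have := hπ0' ⟨u, hud⟩
        simp only at this
        rw [this, hhu]
      have h2 : (π0 u : Y) = w • u := by
        conv_lhs => rw [huy]
        rw [map_smul, coe_smul, ← hw, smul_comm, ← huy]
      rw [← h2, h1]
    have hwm : w - 1 ∈ m := by
      by_contra hc
      apply hu0
      refine (Submodule.mem_bot R).1 (mem_of_smul (N := ⊥) hm hc (fun μ hμ => ?_) ?_)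
      · rw [mem_tor.1 hu μ hμ]; exact zero_mem _
      · rw [sub_smul, hwu, one_smul, sub_self]; exact zero_mem _
    obtain ⟨μ, hμw⟩ : ∃ μ, μ = w - 1 := ⟨_, rfl⟩
    rw [← hμw] at hwm
    have hw1 : w = 1 + μ := by rw [hμw]; ring
    let π : Module.End R Y := (1 - μ) • (P.subtype ∘ₗ π0)
    have hπ : ∀ x, π x = (1 - μ) • (π0 x : Y) := fun x => rfl
    have hπP : ∀ x ∈ P, π x = x := by
      intro x hx
      obtain ⟨c, rfl⟩ := mem_span_singleton.1 hx
      obtain ⟨r, hr⟩ := hez μ hwm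
      have : (1 - μ) * w * e = e := by
        rw [hw1]
        have h3 := hza μ hwm
        linear_combination (-μ) * hr - r * h3
      rw [map_smul, hπ, ← hw, smul_smul (1 - μ), smul_smul _ e, this]
    have hπm : ∀ x, π x ∈ P := fun x => P.smul_mem _ (π0 x).2
    refine ⟨h, π, fun y => hπP _ (hπm y), ?_, fun x => hπP _ (huP (hhs x)), fun x => ?_⟩
    · intro h0
      apply hu0
      rw [← hπP u (huP (mem_span_singleton_self u)), h0]
      rfl
    · rw [hπ, hπ0', sub_smul, one_smul, mem_tor.1 (hspan m u hu _ (hhs _)) μ hwm, sub_zero]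
  · push Not at hA
    obtain ⟨m, hm, ⟨u, hud⟩, hu, hFu⟩ := hA
    simp only at hu
    have hu0 : u ≠ 0 := by
      rintro rfl
      apply hFu
      have : (⟨0, hud⟩ : F.domain) = 0 := rfl
      rw [this, LinearPMap.map_zero]
      exact zero_mem _
    obtain ⟨h, hhu, hhs, hhm⟩ := hmap hm (htF m ⟨u, hud⟩ hu) hFu hu
    have hkill : ∀ x : F.domain, (x : Y) ∈ m • (⊤ : Submodule R Y) → h (F x) = 0 := by
      intro x hx
      have hxt := mem_tor.1 (hspan m u hu _ (hhs (F x)))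
      rcases hm3 m hm with hp | ⟨-, hthr⟩
      · obtain ⟨r, hr, hrx⟩ := pur_smul hp hx
        have : r • x = x := Subtype.ext hrx
        rw [← hxt r hr, ← map_smul, ← LinearPMap.map_smul, this]
      · have hthr' := hthr
        obtain ⟨e, a, hee, hem, ham, ha0, hea, hza, hez⟩ := hthr'
        have h1e := one_sub_mem hm hee hem
        have h2 : h (F x) = h (F (e • x)) := by
          have := hxt _ h1e
          rw [sub_smul, one_smul, sub_eq_zero] at this
          rw [LinearPMap.map_smul, map_smul, ← this]
        rw [h2]
        apply hhm
        by_contra hcon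
        obtain ⟨w, hw⟩ := thr_smul hez hx
        refine hB ⟨m, hm, hthr, e • x, ?_, hcon, smul_mem _ _ hx⟩
        rw [mem_tor]
        intro μ hμ
        rw [coe_smul, hw, smul_smul, hza μ hμ, zero_smul]
    let h' : M →ₗ[R] span R {u} := h.codRestrict _ hhs
    obtain ⟨π0, hπ0⟩ := ss_ext hm (h' ∘ₗ F.toFun) (fun x hx => Subtype.ext (hkill x hx))
    have hπ0' : ∀ x : F.domain, (π0 x : Y) = h (F x) := fun x => congrArg Subtype.val (hπ0 x)
    let π : Module.End R Y := (span R {u}).subtype ∘ₗ π0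
    have hπ : ∀ x, π x = (π0 x : Y) := fun x => rfl
    have hπu : π u = u := by
      have := hπ0' ⟨u, hud⟩
      simp only at this
      rw [hπ, this, hhu]
    have hπP : ∀ x ∈ span R {u}, π x = x := by
      intro x hx
      obtain ⟨c, rfl⟩ := mem_span_singleton.1 hx
      rw [map_smul, hπu]
    refine ⟨h, π, fun y => hπP _ (π0 y).2, ?_, fun x => hπP _ (hhs x), fun x => (hπ0' x).symm⟩
    intro h0
    apply hu0
    rw [← hπu, h0]
    rfl

end alm
end AI

namespace AI
open Submodule

section dd
variable {R : Type u} [CommRing R] {M : Type v} [AddCommGroup M] [Module R M]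
  {Q : Type v} [AddCommGroup Q] [Module R Q]
  {Y : Type w} [AddCommGroup Y] [Module R Y]

def N2 (N : Submodule R M) : Prop := ∀ m : Ideal R, m.IsMaximal → ∀ x ∈ N, x ∈ tor m M →
  x ∈ m • (⊤ : Submodule R M) → x = 0

def N3 (N : Submodule R M) : Prop := ∀ m : Ideal R, m.IsMaximal → ∀ x ∈ tor m M,
  ∃ ν ∈ N, ∃ κ ∈ m • (⊤ : Submodule R M), κ ∈ tor m M ∧ x = ν + κ

theorem ss_mono {A B : Submodule R M} (h : A ≤ B) (hB : IsSemisimpleModule R B) :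
    IsSemisimpleModule R A :=
  IsSemisimpleModule.of_injective (inclusion h) (inclusion_injective h)

variable (R M) in
theorem exists_N : ∃ N : Submodule R M, IsSemisimpleModule R N ∧ N2 N ∧ N3 N := by
  let Kf : {m : Ideal R // m.IsMaximal} → Submodule R M :=
    fun m => tor m.1 M ⊓ m.1 • (⊤ : Submodule R M)
  have hK : iSup Kf ≤ socl R M := iSup_mono fun m => inf_le_left
  obtain ⟨N, hN, h1, h2⟩ := ss_compl socl_ss hK
  refine ⟨N, ss_mono hN socl_ss, ?_, ?_⟩
  · intro m hm x hx hxt hxm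
    rw [← Submodule.mem_bot R, ← h1]
    exact ⟨le_iSup Kf ⟨m, hm⟩ ⟨hxt, hxm⟩, hx⟩
  · intro m hm x hx
    have hxs : x ∈ iSup Kf ⊔ N := by rw [h2]; exact tor_le_socl hm hx
    obtain ⟨k, hk, n, hn, rfl⟩ := mem_sup.1 hxs
    obtain ⟨r, hr, hrk⟩ : ∃ r, r ∉ m ∧ r • k ∈ Kf ⟨m, hm⟩ := by
      refine Submodule.iSup_induction Kf (motive := fun k => ∃ r, r ∉ m ∧ r • k ∈ Kf ⟨m, hm⟩)
        hk ?_ ?_ ?_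
      · rintro ⟨n, hn⟩ x hx
        by_cases hnm : n = m
        · subst hnm
          exact ⟨1, fun h => hm.ne_top ((Ideal.eq_top_iff_one _).2 h), by rwa [one_smul]⟩
        · have : ¬ n ≤ m := fun h => hnm (hn.eq_of_le hm.ne_top h)
          obtain ⟨μ, hμ, hμn⟩ := SetLike.not_le_iff_exists.1 this
          exact ⟨μ, hμn, by rw [mem_tor.1 hx.1 μ hμ]; exact zero_mem _⟩
      · exact ⟨1, fun h => hm.ne_top ((Ideal.eq_top_iff_one _).2 h), by
          rw [smul_zero]; exact zero_mem _⟩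
      · rintro x y ⟨r, hr, hx⟩ ⟨r', hr', hy⟩
        refine ⟨r * r', fun h => (hm.isPrime.mem_or_mem h).elim hr hr', ?_⟩
        have : (r * r') • (x + y) = r' • r • x + r • r' • y := by module
        rw [this]
        exact add_mem (smul_mem _ _ hx) (smul_mem _ _ hy)
    obtain ⟨s, μ, hμ, hs⟩ := inv_mod hm hr
    refine ⟨(s * r) • n, N.smul_mem _ hn, s • r • k, smul_mem _ _ hrk.2, smul_mem _ _ hrk.1, ?_⟩
    have : (k + n) = (s * r) • (k + n) + μ • (k + n) := by
      rw [← add_smul, hs, one_smul]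
    rw [this, mem_tor.1 hx μ hμ]
    module

theorem quot_prop {S : Ideal R} (hC : C3 S) {N : Submodule R M} (h2 : N2 N) (h3 : N3 N)
    (p : M →ₗ[R] Q) (hp : Function.Surjective p) (hk : ∀ x, p x = 0 ↔ x ∈ N)
    {m : Ideal R} (hm : m.IsMaximal) {q : Q} (hq : q ∈ tor m Q) :
    (¬ S ≤ m → q = 0) ∧ (¬ Pur m → q ∈ m • (⊤ : Submodule R Q)) := by
  obtain ⟨hS, hRS, hm3⟩ := hC
  obtain ⟨z, rfl⟩ := hp q
  constructor
  · intro hSm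
    obtain ⟨D, hD, hd1, hd2⟩ := ss_compl hS (inf_le_left : S ⊓ m ≤ S)
    have hDm : ¬ D ≤ m := fun h => hSm (by rw [← hd2]; exact sup_le inf_le_right h)
    obtain ⟨d, hd, hdm⟩ := SetLike.not_le_iff_exists.1 hDm
    have hmd : ∀ μ ∈ m, μ * d = 0 := by
      intro μ hμ
      rw [← Submodule.mem_bot R, ← hd1]
      have : μ * d ∈ D := D.smul_mem μ hd
      exact ⟨⟨hD this, Ideal.mul_mem_right _ _ hμ⟩, this⟩
    obtain ⟨ν, hν, κ, hκ, hκt, hdz⟩ := h3 m hm (d • z) (mem_tor.2 fun μ hμ => by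
      rw [smul_smul, hmd μ hμ, zero_smul])
    have hdκ : d • κ = 0 := by
      refine Submodule.smul_induction_on hκ (fun μ hμ n _ => ?_) (fun x y hx hy => ?_)
      · rw [smul_smul, mul_comm, hmd μ hμ, zero_smul]
      · rw [smul_add, hx, hy, add_zero]
    have hκ0 : κ = 0 := (Submodule.mem_bot R).1 (mem_of_smul (N := ⊥) hm hdm
      (fun μ hμ => by rw [mem_tor.1 hκt μ hμ]; exact zero_mem _)
      (by rw [hdκ]; exact zero_mem _))
    rw [hκ0, add_zero] at hdz
    refine (Submodule.mem_bot R).1 (mem_of_smul (N := ⊥) hm hdm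
      (fun μ hμ => by rw [mem_tor.1 hq μ hμ]; exact zero_mem _) ?_)
    rw [← map_smul, hdz, (hk ν).2 hν]
    exact zero_mem _
  · intro hnp
    obtain ⟨-, e, a, hee, hem, ham, ha0, hea, hza, hez⟩ := (hm3 m hm).resolve_left hnp
    have haz : a • z = 0 := by
      refine h2 m hm _ ((hk _).1 ?_) (mem_tor.2 fun μ hμ => ?_) (smul_mem_smul ham mem_top)
      · rw [map_smul, mem_tor.1 hq a ham]
      · rw [smul_smul, hza μ hμ, zero_smul]
    obtain ⟨ν, hν, κ, hκ, hκt, hez'⟩ := h3 m hm (e • z) (mem_tor.2 fun μ hμ => by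
      obtain ⟨r, hr⟩ := hez μ hμ
      rw [smul_smul, mul_comm, hr, mul_smul, haz, smul_zero])
    have h5 : p z = p κ := by
      have h6 := mem_tor.1 hq _ (one_sub_mem hm hee hem)
      rw [sub_smul, one_smul, sub_eq_zero, ← map_smul, hez', map_add, (hk ν).2 hν, zero_add] at h6
      exact h6
    rw [h5]
    have : p κ ∈ (m • (⊤ : Submodule R M)).map p := mem_map_of_mem hκ
    rw [map_smul''] at this
    exact (show m • (⊤ : Submodule R M).map p ≤ m • (⊤ : Submodule R Q) from
      Submodule.smul_mono le_rfl le_top) this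

theorem quot_ext {S : Ideal R} (hC : C3 S) {N : Submodule R M} (h2 : N2 N) (h3 : N3 N)
    (p : M →ₗ[R] Q) (hp : Function.Surjective p) (hk : ∀ x, p x = 0 ↔ x ∈ N)
    (X : Submodule R Y) (f : X →ₗ[R] Q) : ∃ g : Y →ₗ[R] Q, ∀ x : X, g x = f x := by
  obtain ⟨F, hF0, hsoc⟩ := ext_soc (⟨X, f⟩ : Y →ₗ.[R] Q)
  obtain ⟨g, hg⟩ := ext_thm hC F hsoc (fun m hm u hu => quot_prop hC h2 h3 p hp hk hm (by
    rw [mem_tor]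
    intro μ hμ
    rw [← LinearPMap.map_smul]
    have : μ • u = 0 := Subtype.ext (mem_tor.1 hu μ hμ)
    rw [this, LinearPMap.map_zero]))
  refine ⟨g, fun x => ?_⟩
  have : f x = F ⟨x, hF0.1 x.2⟩ := hF0.2 (by rfl)
  rw [this, ← hg]

end dd
end AI

namespace AI
open Submodule

section gg
variable {R : Type u} [CommRing R]

theorem soc_le_of_essential {Y : Type w} [AddCommGroup Y] [Module R Y] {K : Submodule R Y}
    (hK : ∀ y : Y, y ≠ 0 → ∃ r : R, r • y ≠ 0 ∧ r • y ∈ K) : socl R Y ≤ K := by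
  refine iSup_le ?_
  rintro ⟨n, hn⟩ x hx
  simp only at hx
  by_cases hx0 : x = 0
  · rw [hx0]; exact zero_mem _
  obtain ⟨r, hr0, hr⟩ := hK x hx0
  refine mem_of_smul hn (c := r) (fun h => hr0 (mem_tor.1 hx r h))
    (fun μ hμ => by rw [mem_tor.1 hx μ hμ]; exact zero_mem _) hr

theorem ssq_mono {Y : Type w} [AddCommGroup Y] [Module R Y] {A B : Submodule R Y} (h : A ≤ B)
    (hA : IsSemisimpleModule R (Y ⧸ A)) : IsSemisimpleModule R (Y ⧸ B) :=
  IsSemisimpleModule.of_surjective (Submodule.factor h) (Submodule.factor_surjective h)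

theorem exists_d {S m : Ideal R} (hS : IsSemisimpleModule R S) (hSm : ¬ S ≤ m) :
    ∃ d, d ∉ m ∧ ∀ μ ∈ m, μ * d = 0 := by
  obtain ⟨D, hD, hd1, hd2⟩ := ss_compl hS (inf_le_left : S ⊓ m ≤ S)
  have hDm : ¬ D ≤ m := fun h => hSm (by rw [← hd2]; exact sup_le inf_le_right h)
  obtain ⟨d, hd, hdm⟩ := SetLike.not_le_iff_exists.1 hDm
  refine ⟨d, hdm, fun μ hμ => ?_⟩
  rw [← Submodule.mem_bot R, ← hd1]
  have : μ * d ∈ D := D.smul_mem μ hd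
  exact ⟨⟨hD this, Ideal.mul_mem_right _ _ hμ⟩, this⟩

theorem soc_le_of_not_pur {S m : Ideal R} (hm : m.IsMaximal) (hS : IsSemisimpleModule R S)
    (hp : ¬ Pur m) : S ≤ m := by
  by_contra hSm
  obtain ⟨d, hd, hmd⟩ := exists_d hS hSm
  apply hp
  intro x hx
  obtain ⟨r, μ, hμ, h1⟩ := inv_mod hm hd
  exact ⟨μ, hμ, by linear_combination x * h1 - r * hmd x hx⟩

theorem exists_a {S m : Ideal R} (hm : m.IsMaximal) (hS : IsSemisimpleModule R S)
    (hRS : IsSemisimpleModule R (R ⧸ S)) (hp : ¬ Pur m) :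
    ∃ a ∈ m, a ≠ 0 ∧ ∀ z ∈ m, z * a = 0 := by
  have hSm := soc_le_of_not_pur hm hS hp
  obtain ⟨ρ, hρ, hρS⟩ := exists_rho hRS m
  unfold Pur at hp
  push Not at hp
  obtain ⟨x, hx, hxr⟩ := hp
  obtain ⟨s, hs⟩ : ∃ s, s = (1 - ρ) * x := ⟨_, rfl⟩
  have hsS : s ∈ S := by rw [hs]; exact hρS x hx
  have hsr : ∀ r ∈ m, r * s ≠ s := by
    intro r hr h
    refine hxr (ρ + r - r * ρ) (m.sub_mem (m.add_mem hρ hr) (m.mul_mem_left _ hρ)) ?_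
    rw [hs] at h
    linear_combination h
  have hss : IsSemisimpleModule R (span R {s}) :=
    ss_mono ((span_singleton_le_iff_mem _ _).2 hsS) hS
  obtain ⟨D, hD, h1, h2⟩ := ss_compl hss (T := m • span R {s}) smul_le_right
  have hsm : s ∈ m • span R {s} ⊔ D := by rw [h2]; exact mem_span_singleton_self s
  obtain ⟨t, ht, d, hd, htd⟩ := mem_sup.1 hsm
  refine ⟨d, ?_, ?_, ?_⟩
  · exact hSm ((span_singleton_le_iff_mem _ _).2 hsS (hD hd))
  · rintro rfl
    rw [add_zero] at htd
    rw [htd, mem_smul_span_singleton] at ht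
    obtain ⟨y, hy, hys⟩ := ht
    exact hsr y hy hys
  · intro z hz
    rw [← Submodule.mem_bot R, ← h1]
    exact ⟨smul_mem_smul hz (hD hd), D.smul_mem z hd⟩

def MaxAv (a : R) (C : Ideal R) : Prop := a ∉ C ∧ ∀ z, z ∉ C → ∃ c ∈ C, ∃ r, a = c + r * z

theorem exists_maxav {a : R} {C0 : Ideal R} (h : a ∉ C0) : ∃ C, C0 ≤ C ∧ MaxAv a C := by
  obtain ⟨C, hC0, hC⟩ := zorn_le_nonempty₀ {C : Ideal R | a ∉ C} (by
    intro c hc hch y hy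
    refine ⟨sSup c, ?_, fun z hz => le_sSup hz⟩
    intro ha
    rw [Submodule.mem_sSup_of_directed ⟨y, hy⟩ hch.directedOn] at ha
    obtain ⟨z, hz, haz⟩ := ha
    exact hc hz haz) C0 h
  refine ⟨C, hC0, hC.prop, fun z hz => ?_⟩
  by_contra hcon
  push Not at hcon
  apply hz
  refine hC.le_of_ge (y := C ⊔ span R {z}) ?_ le_sup_left (mem_sup_right (mem_span_singleton_self z))
  intro ha
  obtain ⟨c, hc, y, hy, hcy⟩ := mem_sup.1 ha
  obtain ⟨r, rfl⟩ := mem_span_singleton.1 hy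
  exact hcon c hc r hcy.symm

structure Good (m : Ideal R) (a : R) (C : Ideal R) : Prop where
  max : m.IsMaximal
  am : a ∈ m
  a0 : a ≠ 0
  ma : ∀ z ∈ m, z * a = 0
  aC : a ∉ C
  Cm : C ≤ m
  dec : ∀ z ∈ m, ∃ c ∈ C, ∃ r, z = c + r * a

theorem good_of {S m : Ideal R} (hm : m.IsMaximal) (hS : S = socl R R)
    (hRS : IsSemisimpleModule R (R ⧸ S)) {a : R} (ham : a ∈ m) (ha0 : a ≠ 0)
    (hza : ∀ z ∈ m, z * a = 0) {C : Ideal R} (hC : MaxAv a C) : Good m a C := by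
  refine ⟨hm, ham, ha0, hza, hC.1, ?_, ?_⟩
  · intro c hc
    by_contra hcm
    apply hC.1
    refine mem_of_smul (N := C) hm hcm (fun μ hμ => ?_) (C.mul_mem_right _ hc)
    rw [smul_eq_mul, hza μ hμ]; exact C.zero_mem
  · have hle : S ≤ C ⊔ span R {a} := by
      rw [hS]
      apply soc_le_of_essential
      intro y hy
      by_cases hyC : y ∈ C
      · exact ⟨1, by rwa [one_smul], by rw [one_smul]; exact mem_sup_left hyC⟩
      · obtain ⟨c, hc, r, h⟩ := hC.2 y hyC
        have hry : r • y = -c + a := by rw [smul_eq_mul]; linear_combination -h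
        refine ⟨r, fun h0 => hC.1 ?_, ?_⟩
        · rw [hry] at h0
          have : a = c := by linear_combination h0
          rwa [this]
        · rw [hry]
          exact add_mem (mem_sup_left (C.neg_mem hc)) (mem_sup_right (mem_span_singleton_self a))
    obtain ⟨ρ, hρ, hρS⟩ := exists_rho (ssq_mono hle hRS) m
    intro z hz
    obtain ⟨c, hc, y, hy, hcy⟩ := mem_sup.1 (hρS z hz)
    obtain ⟨r, rfl⟩ := mem_span_singleton.1 hy
    rw [smul_eq_mul] at hcy
    refine ⟨z - r * a, ?_, r, by ring⟩
    by_contra hz2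
    obtain ⟨c', hc', t, ht⟩ := hC.2 _ hz2
    apply hC.1
    have : a = (1 - ρ) * c' + t * c := by
      have := hza ρ hρ
      linear_combination (1 - ρ) * ht + this - t * hcy  + t * r * this
    rw [this]
    exact C.add_mem (C.mul_mem_left _ hc') (C.mul_mem_left _ hc)

theorem Good.thr {m C : Ideal R} {a b : R} (h : Good m a C) (hb : b ∉ m)
    (hbC : ∀ c ∈ C, b * c = 0) : Thr m := by
  obtain ⟨r, μ, hμ, h1⟩ := inv_mod h.max hb
  obtain ⟨c, hc, t, rfl⟩ := h.dec μ hμ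
  have heC : ∀ x ∈ C, (1 - c) * x = 0 := by
    intro x hx
    linear_combination r * hbC x hx + t * h.ma x (h.Cm hx) - x * h1
  refine ⟨1 - c, a, ?_, one_sub_notMem h.max (h.Cm hc), h.am, h.a0, ?_, h.ma, ?_⟩
  · linear_combination - heC c hc
  · linear_combination - h.ma c (h.Cm hc)
  · intro z hz
    obtain ⟨c', hc', s, rfl⟩ := h.dec z hz
    exact ⟨s, by linear_combination heC c' hc' - s * h.ma c (h.Cm hc)⟩

theorem Good.mapOut {m C : Ideal R} {a : R} (h : Good m a C) {P : Type w} [AddCommGroup P]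
    [Module R P] {p : P} (hp : p ∈ tor m P) :
    ∃ f : m →ₗ[R] P, f ⟨a, h.am⟩ = p ∧ ∀ c (hc : c ∈ C), f ⟨c, h.Cm hc⟩ = 0 := by
  have hrm : ∀ r : R, r * a ∈ C → r ∈ m := by
    intro r hr
    by_contra hrm
    refine h.aC (mem_of_smul (N := C) h.max hrm (fun μ hμ => ?_) hr)
    rw [smul_eq_mul, h.ma μ hμ]; exact C.zero_mem
  have H : ∀ r : R, r • a = 0 → r • p = 0 := fun r hr =>
    mem_tor.1 hp r (hrm r (by rw [← smul_eq_mul, hr]; exact C.zero_mem))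
  let q : R →ₗ.[R] P := LinearPMap.mkSpanSingleton' a p H
  have hq : ∀ (c : R) (hc : c • a ∈ q.domain), q ⟨c • a, hc⟩ = c • p := fun c hc =>
    LinearPMap.mkSpanSingleton'_apply a p H c hc
  let z : R →ₗ.[R] P := ⟨C, 0⟩
  have hcomp : ∀ (x : z.domain) (y : q.domain), (x : R) = y → z x = q y := by
    rintro ⟨x, hx⟩ ⟨y, hy⟩ hxy
    obtain ⟨r, rfl⟩ := mem_span_singleton.1 hy
    simp only at hxy
    rw [hq]
    change (0 : P) = _
    rw [mem_tor.1 hp r (hrm r (by rw [← smul_eq_mul, ← hxy]; exact hx))]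
  let F := z.sup q hcomp
  have had : a ∈ q.domain := mem_span_singleton_self a
  have hmF : m ≤ F.domain := by
    intro x hx
    obtain ⟨c, hc, r, rfl⟩ := h.dec x hx
    change _ ∈ z.domain ⊔ q.domain
    exact add_mem (mem_sup_left hc) (mem_sup_right (q.domain.smul_mem r had))
  refine ⟨F.toFun ∘ₗ inclusion hmF, ?_, fun c hc => ?_⟩
  · have h1 : q ⟨a, had⟩ = F ⟨a, hmF h.am⟩ := (LinearPMap.right_le_sup z q hcomp).2 rfl
    have h2 := hq 1 (by rwa [one_smul])
    simp only [one_smul] at h2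
    rw [h2] at h1
    exact h1.symm
  · have h1 : z ⟨c, hc⟩ = F ⟨c, hmF (h.Cm hc)⟩ := (LinearPMap.left_le_sup z q hcomp).2 rfl
    exact h1.symm

theorem Good.mapOut_ext {m C : Ideal R} {a : R} (h : Good m a C) {P : Type w} [AddCommGroup P]
    [Module R P] {p : P} (hp : p ∈ tor m P)
    (hext : ∀ f : m →ₗ[R] P, ∃ g : R →ₗ[R] P, ∀ x : m, g x = f x) : ∃ w : P, p = a • w := by
  obtain ⟨f, hf, -⟩ := h.mapOut hp
  obtain ⟨g, hg⟩ := hext f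
  refine ⟨g 1, ?_⟩
  rw [← hf, ← hg, ← map_smul, smul_eq_mul, mul_one]

theorem one_tor (m : Ideal R) : (Ideal.Quotient.mk m 1 : R ⧸ m) ∈ tor m (R ⧸ m) := by
  rw [mem_tor]
  intro μ hμ
  rw [Algebra.smul_def, Ideal.Quotient.algebraMap_eq, ← map_mul, mul_one]
  exact Ideal.Quotient.eq_zero_iff_mem.2 hμ

theorem Good.no_ext {m C : Ideal R} {a : R} (h : Good m a C) :
    ¬ ∀ f : m →ₗ[R] (R ⧸ m), ∃ g : R →ₗ[R] (R ⧸ m), ∀ x : m, g x = f x := by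
  intro hext
  obtain ⟨w, hw⟩ := h.mapOut_ext (one_tor m) hext
  obtain ⟨w, rfl⟩ := Ideal.Quotient.mk_surjective w
  rw [Algebra.smul_def, Ideal.Quotient.algebraMap_eq, ← map_mul, Ideal.Quotient.eq] at hw
  have := m.add_mem hw (m.mul_mem_right w h.am)
  rw [sub_add_cancel] at this
  exact h.max.ne_top ((Ideal.eq_top_iff_one _).2 this)

theorem Good.thr_of_one {m C : Ideal R} {a : R} (h : Good m a C)
    (h1 : AlmostNInjective R (R ⧸ m) R) : Thr m := by
  obtain ⟨f, hf, hfC⟩ := h.mapOut (one_tor m)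
  rcases h1 m f with ⟨g, hg⟩ | ⟨π, hπ, hπ0, k, hk⟩
  · exfalso
    have hw : (Ideal.Quotient.mk m 1 : R ⧸ m) = a • g 1 := by
      rw [← hf, ← hg, ← map_smul, smul_eq_mul, mul_one]
    obtain ⟨w, hw'⟩ := Ideal.Quotient.mk_surjective (g 1)
    rw [← hw', Algebra.smul_def, Ideal.Quotient.algebraMap_eq, ← map_mul, Ideal.Quotient.eq] at hw
    have := m.add_mem hw (m.mul_mem_right w h.am)
    rw [sub_add_cancel] at this
    exact h.max.ne_top ((Ideal.eq_top_iff_one _).2 this)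
  · have hπ1 : ∀ x, π x = x * π 1 := fun x => by
      rw [← smul_eq_mul, ← map_smul, smul_eq_mul, mul_one]
    have hCe : ∀ c ∈ C, π 1 * c = 0 := by
      intro c hc
      rw [mul_comm, ← hπ1]
      have := hk ⟨c, h.Cm hc⟩
      rw [hfC c hc, map_zero] at this
      exact this.symm
    have hee : π 1 * π 1 = π 1 := by
      rw [← hπ1]
      exact LinearMap.congr_fun hπ 1
    refine h.thr (b := π 1) ?_ hCe
    intro hem
    apply hπ0
    have h0 : π 1 = 0 := by
      obtain ⟨c, hc, r, hcr⟩ := h.dec _ hem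
      rw [← hee]
      conv_lhs => rw [hcr]
      have e1 := hCe c hc
      have e2 := h.ma _ hem
      linear_combination e1 + r * e2 - π 1 * hcr + hee - hee + (π 1 - c - r * a) * hcr
    refine LinearMap.ext fun x => ?_
    rw [hπ1, h0, mul_zero]
    rfl

end gg
end AI

namespace AI
open Submodule

section hh
variable {R : Type u} [CommRing R] {T : Type v} [AddCommGroup T] [Module R T]

theorem not_fg_of_indep {ι : Type*} {f : ι → Submodule R T} (hf : iSupIndep f)
    (hf0 : ∀ i, f i ≠ ⊥) {t : Set ι} (ht : t.Infinite) : ¬ (⨆ i ∈ t, f i).FG := by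
  intro hfg
  rw [fg_iff_compact] at hfg
  obtain ⟨F, hF⟩ := CompleteLattice.IsCompactElement.exists_finset_of_le_iSup _ hfg (fun i : t => f i)
    (by rw [iSup_subtype'])
  classical
  obtain ⟨j, hj, hjF⟩ := ht.exists_notMem_finset (F.image Subtype.val)
  have hd := hf.disjoint_biSup_biSup (s := {j}) (t := (F.image Subtype.val : Finset ι))
    (Set.disjoint_singleton_left.2 hjF)
  rw [iSup_singleton] at hd
  have h1 : f j ≤ ⨆ i ∈ ((F.image Subtype.val : Finset ι) : Set ι), f i := by
    refine (le_biSup f hj).trans (hF.trans ?_)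
    refine iSup₂_le fun i hi => ?_
    exact le_biSup f (i := (i : ι)) (Finset.mem_coe.2 (Finset.mem_image_of_mem _ hi))
  exact hf0 j (disjoint_self.1 (hd.mono_right h1))

theorem split_nonfg (hss : IsSemisimpleModule R T) (hT : ¬ (⊤ : Submodule R T).FG) :
    ∃ A₁ A₂ : Submodule R T, A₁ ⊓ A₂ = ⊥ ∧ A₁ ⊔ A₂ = ⊤ ∧ ¬ A₁.FG ∧ ¬ A₂.FG := by
  obtain ⟨s, hs, htop, hsimp⟩ := IsSemisimpleModule.exists_sSupIndep_sSup_simples_eq_top R T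
  have hf := (sSupIndep_iff s).1 hs
  have hf0 : ∀ i : s, (i : Submodule R T) ≠ ⊥ := fun i =>
    (isSimpleModule_iff_isAtom.1 (hsimp i i.2)).1
  have hinf : (Set.univ : Set s).Infinite := by
    intro hfin
    apply hT
    rw [← htop, sSup_eq_iSup']
    have : Finite s := Set.finite_univ_iff.1 hfin
    refine Submodule.fg_iSup _ fun i => ?_
    have := hsimp i i.2
    exact Module.Finite.iff_fg.1 inferInstance
  obtain ⟨t, u, htu, hdis, hcard⟩ := hinf.exists_union_disjoint_cardinal_eq_of_infinite
  have hiff : t.Infinite ↔ u.Infinite := by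
    rw [← Set.infinite_coe_iff, ← Set.infinite_coe_iff, Cardinal.infinite_iff,
      Cardinal.infinite_iff, hcard]
  have ht : t.Infinite := by
    by_contra h
    have hu : ¬ u.Infinite := fun hu => h (hiff.2 hu)
    rw [Set.not_infinite] at h hu
    exact hinf (htu ▸ h.union hu)
  refine ⟨⨆ i ∈ t, (i : Submodule R T), ⨆ i ∈ u, (i : Submodule R T), ?_, ?_,
    not_fg_of_indep hf hf0 ht, not_fg_of_indep hf hf0 (hiff.1 ht)⟩
  · exact disjoint_iff.1 (hf.disjoint_biSup_biSup hdis)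
  · rw [← iSup_union, htu, iSup_univ, ← sSup_eq_iSup', htop]

theorem split_nonfg' {T : Submodule R T} (hss : IsSemisimpleModule R T) (hT : ¬ T.FG) :
    ∃ A₁ A₂, A₁ ⊓ A₂ = ⊥ ∧ A₁ ⊔ A₂ = T ∧ ¬ A₁.FG ∧ ¬ A₂.FG := by
  have hmf : ∀ A : Submodule R T, (A.map T.subtype).FG → A.FG := fun A h =>
    fg_of_fg_map_injective T.subtype T.subtype_injective h
  obtain ⟨A₁, A₂, h1, h2, h3, h4⟩ := split_nonfg hss
    (fun h => hT (by have := h.map T.subtype; rwa [Submodule.map_top, range_subtype] at this))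
  refine ⟨A₁.map T.subtype, A₂.map T.subtype, ?_, ?_, fun h => h3 (hmf _ h),
    fun h => h4 (hmf _ h)⟩
  · rw [← Submodule.map_inf _ T.subtype_injective, h1, Submodule.map_bot]
  · rw [← Submodule.map_sup, h2, Submodule.map_top, range_subtype]

theorem fg_of_le_span {A B : Submodule R T} (hB : IsSemisimpleModule R B) {y : T} (hy : y ∈ B)
    (hA : A ≤ span R {y}) : A.FG := by
  have : IsSemisimpleModule R (span R {y}) := ss_mono ((span_singleton_le_iff_mem _ _).2 hy) hB
  have : IsNoetherian R (span R {y}) := inferInstance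
  exact isNoetherian_submodule.1 this A hA

def ExtP (R : Type u) [CommRing R] (Q : Type v) [AddCommGroup Q] [Module R Q] : Prop :=
  ∀ (X : Ideal R) (f : X →ₗ[R] Q), ∃ g : R →ₗ[R] Q, ∀ x : X, g x = f x

theorem ExtP.congr {Q Q' : Type v} [AddCommGroup Q] [Module R Q] [AddCommGroup Q'] [Module R Q']
    (e : Q ≃ₗ[R] Q') (h : ExtP R Q) : ExtP R Q' := by
  intro X f
  obtain ⟨g, hg⟩ := h X (e.symm.toLinearMap ∘ₗ f)
  exact ⟨e.toLinearMap ∘ₗ g, fun x => by simp [hg]⟩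

end hh

section two
variable {R : Type v} [CommRing R]

theorem extP_of_inj {Q : Type v} [AddCommGroup Q] [Module R Q] (h : Module.Injective R Q) :
    ExtP R Q := fun X f => h.out X.subtype X.subtype_injective f

def Two (R : Type u) [CommRing R] : Prop := ∀ (M : Type v) [AddCommGroup M] [Module R M],
      ∃ N : Submodule R M, IsSemisimpleModule R ↥N ∧ Module.Injective R (M ⧸ N)

theorem two_quot (h : Two.{v, v} R) (A : Ideal R) :
    ∃ B : Ideal R, A ≤ B ∧ IsSemisimpleModule R (Submodule.map (mkQ A) B) ∧ ExtP R (R ⧸ B) := by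
  obtain ⟨N, hN, hinj⟩ := h (R ⧸ A)
  have hAB : A ≤ N.comap (mkQ A) := by
    intro x hx
    rw [mem_comap, mkQ_apply, (Submodule.Quotient.mk_eq_zero A).2 hx]; exact N.zero_mem
  have hmap : Submodule.map (mkQ A) (N.comap (mkQ A)) = N :=
    map_comap_eq_of_surjective (mkQ_surjective A) N
  refine ⟨N.comap (mkQ A), hAB, by rwa [hmap], ?_⟩
  have h1 : ExtP R ((R ⧸ A) ⧸ Submodule.map (mkQ A) (N.comap (mkQ A))) := by
    rw [hmap]; exact extP_of_inj hinj
  exact h1.congr (Submodule.quotientQuotientEquivQuotient A (N.comap (mkQ A)) hAB)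

theorem two_ss (h : Two.{v, v} R) : IsSemisimpleModule R (R ⧸ socl R R) := by
  apply ssq_of_compl_top
  intro T hST
  obtain ⟨N, hN, hinj⟩ := h T
  obtain ⟨g, hg⟩ := extP_of_inj hinj T N.mkQ
  have hN' : N.map T.subtype ≤ socl R R := ss_le_socl (map_ss _ hN)
  refine ⟨LinearMap.ker g ⊔ socl R R, le_sup_right, ?_, ?_⟩
  · rintro x ⟨hxT, hx⟩
    obtain ⟨z, hz, s, hs, rfl⟩ := mem_sup.1 hx
    refine add_mem (hN' ?_) hs
    have hzT : z ∈ T := by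
      have := T.sub_mem hxT (hST hs)
      rwa [add_sub_cancel_right] at this
    have h1 := hg ⟨z, hzT⟩
    simp only at h1
    rw [LinearMap.mem_ker.1 hz] at h1
    exact ⟨⟨z, hzT⟩, (Submodule.Quotient.mk_eq_zero N).1 h1.symm, rfl⟩
  · rw [eq_top_iff]
    intro r _
    obtain ⟨t, ht⟩ := N.mkQ_surjective (g r)
    have : r = t + (r - t) := by ring
    rw [this]
    refine add_mem (mem_sup_left t.2) (mem_sup_right (mem_sup_left ?_))
    rw [LinearMap.mem_ker, map_sub, hg, ht, sub_self]

theorem vinj (h : Two.{v, v} R) {m C : Ideal R} {a : R} (hg : Good m a C) (hC : MaxAv a C) :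
    ExtP R (R ⧸ C) := by
  obtain ⟨B, hCB, hss, hext⟩ := two_quot h C
  by_cases hBC : B ≤ C
  · rwa [le_antisymm hCB hBC]
  exfalso
  have hav : ∀ D : Ideal R, C ≤ D → ¬ D ≤ C → a ∈ D := by
    intro D hCD hDC
    obtain ⟨z, hz, hzC⟩ := SetLike.not_le_iff_exists.1 hDC
    obtain ⟨c, hc, r, hr⟩ := hC.2 z hzC
    rw [hr]
    exact D.add_mem (hCD hc) (D.mul_mem_left _ hz)
  have haB := hav B hCB hBC
  have hmB : m ≤ B := by
    intro z hz
    obtain ⟨c, hc, r, rfl⟩ := hg.dec z hz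
    exact B.add_mem (hCB hc) (B.mul_mem_left _ haB)
  by_cases hBt : B = ⊤
  · subst hBt
    obtain ⟨D, hCD, h1, h2⟩ := ssq_compl_top (ssq_top_iff.1 hss) hg.Cm
    have hDC : ¬ D ≤ C := by
      intro hle
      apply hg.max.ne_top
      rw [← h2, eq_comm, sup_eq_left]
      exact hle.trans hg.Cm
    have := hav D hCD hDC
    exact hC.1 (by rw [← h1]; exact ⟨hg.am, this⟩)
  · have := hg.max.eq_of_le hBt hmB
    subst this
    exact hg.no_ext (hext _)

theorem mk_tor {m B : Ideal R} {y : R} (h : ∀ z ∈ m, z * y ∈ B) : (mkQ B y) ∈ tor m (R ⧸ B) := by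
  rw [mem_tor]
  intro μ hμ
  rw [← map_smul, mkQ_apply, Submodule.Quotient.mk_eq_zero]
  exact h μ hμ

theorem Good.ext_quot {m C : Ideal R} {a : R} (hg : Good m a C) {B : Ideal R}
    (hext : ExtP R (R ⧸ B)) {y : R} (h : ∀ z ∈ m, z * y ∈ B) : ∃ w, y - a * w ∈ B := by
  obtain ⟨w, hw⟩ := hg.mapOut_ext (mk_tor h) (hext _)
  obtain ⟨w, rfl⟩ := mkQ_surjective B w
  rw [← map_smul, ← sub_eq_zero, ← map_sub, mkQ_apply, Submodule.Quotient.mk_eq_zero] at hw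
  exact ⟨w, hw⟩

theorem dim_claim (h : Two.{v, v} R) {m C : Ideal R} {a : R} (hg : Good m a C)
    {y : R} (hy : y ∈ m) (hmy : ∀ z ∈ m, z * y = 0) : ∃ r, y = r * a := by
  by_contra hcon
  have hya : y ∉ span R {a} := by
    intro hs
    obtain ⟨r, hr⟩ := mem_span_singleton.1 hs
    exact hcon ⟨r, hr.symm⟩
  obtain ⟨C', hC', hmax⟩ := exists_maxav hya
  have hy0 : y ≠ 0 := by rintro rfl; exact hya (zero_mem _)
  have hg' := good_of hg.max rfl (two_ss h) hy hy0 hmy hmax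
  obtain ⟨w, hw⟩ := hg.ext_quot (vinj h hg' hmax) (y := y)
    (fun z hz => by rw [hmy z hz]; exact C'.zero_mem)
  apply hmax.1
  have := C'.add_mem hw (C'.mul_mem_right w (hC' (mem_span_singleton_self a)))
  rwa [sub_add_cancel] at this

theorem split_s {m : Ideal R} {s : R} (hss : IsSemisimpleModule R (span R {s})) :
    ∃ d ∈ span R {s}, (∀ z ∈ m, z * d = 0) ∧ ∃ y ∈ m, y * s + d = s := by
  obtain ⟨D, hD, h1, h2⟩ := ss_compl hss (T := m • span R {s}) smul_le_right
  have hsm : s ∈ m • span R {s} ⊔ D := by rw [h2]; exact mem_span_singleton_self s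
  obtain ⟨t, ht, d, hd, htd⟩ := mem_sup.1 hsm
  refine ⟨d, hD hd, ?_, ?_⟩
  · intro z hz
    rw [← Submodule.mem_bot R, ← h1]
    exact ⟨smul_mem_smul hz (hD hd), D.smul_mem z hd⟩
  · rw [mem_smul_span_singleton] at ht
    obtain ⟨y, hy, rfl⟩ := ht
    exact ⟨y, hy, htd⟩

theorem Good.rm {m C : Ideal R} {a : R} (h : Good m a C) {r : R} (hr : r * a ∈ C) :
    r * a = 0 := by
  by_cases hrm : r ∈ m
  · exact h.ma r hrm
  · exfalso
    refine h.aC (mem_of_smul (N := C) h.max hrm (fun μ hμ => ?_) hr)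
    rw [smul_eq_mul, h.ma μ hμ]; exact C.zero_mem

theorem soc_idem (h : Two.{v, v} R) {m C : Ideal R} {a : R} (hg : Good m a C)
    {c : R} (hc : c ∈ C) (hcS : c ∈ socl R R) : ∃ y ∈ m, y * c = c := by
  obtain ⟨d, hd, hmd, y, hy, hyd⟩ := split_s (m := m)
    (ss_mono ((span_singleton_le_iff_mem _ _).2 hcS) socl_ss)
  have hdC : d ∈ C := (span_singleton_le_iff_mem _ _).2 hc hd
  obtain ⟨r, rfl⟩ := dim_claim h hg (hg.Cm hdC) hmd
  rw [hg.rm hdC, add_zero] at hyd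
  exact ⟨y, hy, hyd⟩

theorem thr_of_two (h : Two.{v, v} R) {m C : Ideal R} {a : R} (hg : Good m a C) : Thr m := by
  have hm := hg.max
  obtain ⟨ρ, hρ, hρS⟩ := exists_rho (two_ss h) m
  obtain ⟨t, ht⟩ : ∃ t, t = 1 - ρ := ⟨_, rfl⟩
  have htm : t ∉ m := by rw [ht]; exact one_sub_notMem hm hρ
  rw [← ht] at hρS
  let τ : R →ₗ[R] (R ⧸ span R {a}) := mkQ _ ∘ₗ LinearMap.toSpanSingleton R R t
  have hτ : ∀ r, τ r = mkQ _ (r * t) := fun r => rfl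
  obtain ⟨A, hA⟩ : ∃ A : Ideal R, A = LinearMap.ker τ := ⟨_, rfl⟩
  have hA' : ∀ r, r ∈ A ↔ ∃ s, r * t = s * a := by
    intro r
    rw [hA, LinearMap.mem_ker, hτ, mkQ_apply, Submodule.Quotient.mk_eq_zero, mem_span_singleton]
    exact ⟨fun ⟨s, hs⟩ => ⟨s, hs.symm⟩, fun ⟨s, hs⟩ => ⟨s, hs.symm⟩⟩
  have hAm : A ≤ m := by
    intro r hr
    obtain ⟨s, hs⟩ := (hA' r).1 hr
    have : r * t ∈ m := by rw [hs]; exact m.mul_mem_left _ hg.am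
    exact (hm.isPrime.mem_or_mem this).resolve_right htm
  have hmA : IsSemisimpleModule R (Submodule.map (mkQ A) m) := by
    let φ : (R ⧸ A) →ₗ[R] (R ⧸ span R {a}) := Submodule.liftQ A τ hA.le
    have hφ : Function.Injective φ :=
      LinearMap.ker_eq_bot.1 (ker_liftQ_eq_bot _ _ _ hA.ge)
    have hS2 : IsSemisimpleModule R ((socl R R).map (mkQ (span R {a}))) := map_ss _ socl_ss
    have hmaps : ∀ x ∈ Submodule.map (mkQ A) m, φ x ∈ (socl R R).map (mkQ (span R {a})) := by
      rintro _ ⟨x, hx, rfl⟩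
      exact ⟨x * t, by rw [mul_comm]; exact hρS x hx, rfl⟩
    exact IsSemisimpleModule.of_injective (φ.restrict hmaps) (fun x y hxy =>
      Subtype.ext (hφ (congrArg Subtype.val hxy)))
  obtain ⟨B, hAB, hBss, hext⟩ := two_quot h A
  by_cases hBm : B ≤ m
  · exfalso
    have hmB : IsSemisimpleModule R (Submodule.map (mkQ B) m) := by
      have h1 : Submodule.map (mkQ B) m =
          Submodule.map (Submodule.factor hAB) (Submodule.map (mkQ A) m) := by
        rw [← Submodule.map_comp]
        rfl
      rw [h1]
      exact map_ss _ hmA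
    by_cases hfg : (Submodule.map (mkQ B) m).FG
    · obtain ⟨b, hb1, hb⟩ := exists_sub_one_mem_and_smul_eq_zero_of_fg_of_le_smul m _ hfg (by
        rintro _ ⟨x, hx, rfl⟩
        obtain ⟨c, hc, r, hcr⟩ := hg.dec x hx
        obtain ⟨y, hy, hyc⟩ := soc_idem h hg (C.mul_mem_right t hc)
          (by rw [mul_comm]; exact hρS c (hg.Cm hc))
        have h1 : x - y * x ∈ B := by
          apply hAB
          rw [hA']
          exact ⟨(1 - y) * r * t, by rw [hcr]; linear_combination -hyc⟩
        have h2 : mkQ B x = y • mkQ B x := by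
          rw [← map_smul, ← sub_eq_zero, ← map_sub, mkQ_apply, Submodule.Quotient.mk_eq_zero]
          exact h1
        rw [h2]
        exact smul_mem_smul hy (mem_map_of_mem hx))
      obtain ⟨w, hw⟩ := hg.ext_quot hext (y := b) (fun z hz => by
        have := hb (mkQ B z) (mem_map_of_mem hz)
        rw [← map_smul, mkQ_apply, Submodule.Quotient.mk_eq_zero] at this
        rw [mul_comm]; exact this)
      have hbm : b ∈ m := by
        have := m.add_mem (hBm hw) (m.mul_mem_right w hg.am)
        rwa [sub_add_cancel] at this
      have := m.sub_mem hbm hb1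
      rw [sub_sub_cancel] at this
      exact hm.ne_top ((Ideal.eq_top_iff_one _).2 this)
    · obtain ⟨A₁, A₂, hinf, hsup, hA1, hA2⟩ := split_nonfg' hmB hfg
      let z1 : (R ⧸ B) →ₗ.[R] (R ⧸ B) := ⟨A₁, A₁.subtype⟩
      let z2 : (R ⧸ B) →ₗ.[R] (R ⧸ B) := ⟨A₂, 0⟩
      have hcomp := LinearPMap.sup_h_of_disjoint z1 z2 (disjoint_iff.2 hinf)
      let F := z1.sup z2 hcomp
      have hF : ∀ x ∈ m, mkQ B x ∈ F.domain := by
        intro x hx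
        have : F.domain = Submodule.map (mkQ B) m := hsup
        rw [this]
        exact mem_map_of_mem hx
      obtain ⟨g, hgF⟩ := hext m (F.toFun ∘ₗ
        ((mkQ B).restrict (p := m) (q := F.domain) hF))
      have hgF' : ∀ x (hx : x ∈ m), x • g 1 = F ⟨mkQ B x, hF x hx⟩ := by
        intro x hx
        rw [← map_smul, smul_eq_mul, mul_one]
        exact hgF ⟨x, hx⟩
      have hg1 : ∀ x (hx : x ∈ m), mkQ B x ∈ A₁ → x • g 1 = mkQ B x := by
        intro x hx h1
        rw [hgF' x hx]
        have : z1 ⟨mkQ B x, h1⟩ = F ⟨mkQ B x, hF x hx⟩ :=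
          (LinearPMap.left_le_sup z1 z2 hcomp).2 rfl
        rw [← this]
        rfl
      have hg2 : ∀ x (hx : x ∈ m), mkQ B x ∈ A₂ → x • g 1 = 0 := by
        intro x hx h1
        rw [hgF' x hx]
        have : z2 ⟨mkQ B x, h1⟩ = F ⟨mkQ B x, hF x hx⟩ :=
          (LinearPMap.right_le_sup z1 z2 hcomp).2 rfl
        rw [← this]
        rfl
      obtain ⟨w, hw⟩ := mkQ_surjective B (g 1)
      by_cases hwm : w ∈ m
      · apply hA1
        refine fg_of_le_span hmB (mem_map_of_mem hwm) ?_
        intro y hy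
        have hy' : y ∈ Submodule.map (mkQ B) m := by rw [← hsup]; exact mem_sup_left hy
        obtain ⟨x, hx, rfl⟩ := hy'
        rw [← hg1 x hx hy, ← hw]
        exact smul_mem _ _ (mem_span_singleton_self _)
      · apply hA2
        obtain ⟨r, μ, hμ, h1⟩ := inv_mod hm hwm
        refine fg_of_le_span hmB (mem_map_of_mem hμ) ?_
        intro y hy
        have hy' : y ∈ Submodule.map (mkQ B) m := by rw [← hsup]; exact mem_sup_right hy
        obtain ⟨x, hx, rfl⟩ := hy'
        have e1 : x = r • (x • w) + x • μ := by
          simp only [smul_eq_mul]; linear_combination -x * h1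
        have e2 : mkQ B x = x • mkQ B μ := by
          conv_lhs => rw [e1]
          rw [map_add, map_smul, map_smul, map_smul, hw, hg2 x hx hy, smul_zero, zero_add]
        rw [e2]
        exact smul_mem _ _ (mem_span_singleton_self _)
  · obtain ⟨D, hAD, hDB, h1, h2⟩ := ssq_compl hBss (T := B ⊓ m) (le_inf hAB hAm) inf_le_left
    have hDm : ¬ D ≤ m := fun hle => hBm (by rw [← h2]; exact sup_le inf_le_right hle)
    obtain ⟨b, hb, hbm⟩ := SetLike.not_le_iff_exists.1 hDm
    refine hg.thr (b := b * t) (fun hx => (hm.isPrime.mem_or_mem hx).elim hbm htm) ?_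
    intro c hc
    have hcb : c * b ∈ A := by
      rw [← h1]
      exact ⟨⟨hDB (Ideal.mul_mem_left D _ hb), m.mul_mem_right _ (hg.Cm hc)⟩, Ideal.mul_mem_left D _ hb⟩
    obtain ⟨s, hs⟩ := (hA' _).1 hcb
    have e1 : b * t * c = s * a := by rw [← hs]; ring
    rw [e1]
    apply hg.rm
    rw [← e1]
    exact C.mul_mem_left _ hc

theorem C3_of_two (h : Two.{v, v} R) : C3 (socl R R) := by
  refine ⟨socl_ss, two_ss h, fun m hm => ?_⟩
  by_cases hp : Pur m
  · exact Or.inl hp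
  right
  obtain ⟨a, ham, ha0, hma⟩ := exists_a hm socl_ss (two_ss h) hp
  obtain ⟨C, -, hC⟩ := exists_maxav (a := a) (C0 := ⊥) (by simpa using ha0)
  exact ⟨soc_le_of_not_pur hm socl_ss hp, thr_of_two h (good_of hm rfl (two_ss h) ham ha0 hma hC)⟩

end two
end AI

namespace AI
open Submodule

section tr
variable {R : Type u} [CommRing R] {R₀ : Type w} [CommRing R₀]

/-- The scalars of `R` act through scalars of `R₀`, simultaneously on `A` and `B`. -/
def Thru (R : Type u) [CommRing R] (R₀ : Type w) [CommRing R₀] (A B : Type v)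
    [AddCommGroup A] [Module R A] [Module R₀ A] [AddCommGroup B] [Module R B] [Module R₀ B] :
    Prop :=
  ∀ r : R, ∃ s : R₀, (∀ x : A, r • x = s • x) ∧ ∀ x : B, r • x = s • x

/-- change of scalars for linear maps -/
def cv {A B : Type v} [AddCommGroup A] [Module R A] [Module R₀ A] [AddCommGroup B] [Module R B]
    [Module R₀ B] (h : Thru R R₀ A B) (f : A →ₗ[R₀] B) : A →ₗ[R] B where
  toFun := f
  map_add' := f.map_add
  map_smul' r x := by
    obtain ⟨s, h1, h2⟩ := h r
    simp [h1, h2]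

/-- change of scalars for submodules -/
def cs {A B : Type v} [AddCommGroup A] [Module R A] [Module R₀ A] [AddCommGroup B] [Module R B]
    [Module R₀ B] (h : Thru R R₀ A B) (N : Submodule R₀ A) : Submodule R A where
  carrier := N
  add_mem' := N.add_mem
  zero_mem' := N.zero_mem
  smul_mem' r x hx := by
    obtain ⟨s, h1, -⟩ := h r
    rw [h1]
    exact N.smul_mem s hx

/-- change of scalars for linear maps on submodules -/
def csv {A B : Type v} [AddCommGroup A] [Module R A] [Module R₀ A] [AddCommGroup B] [Module R B]
    [Module R₀ B] (h : Thru R R₀ A B) (N : Submodule R₀ A) (f : N →ₗ[R₀] B) :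
    cs h N →ₗ[R] B where
  toFun x := f ⟨x.1, x.2⟩
  map_add' x y := f.map_add ⟨x.1, x.2⟩ ⟨y.1, y.2⟩
  map_smul' r x := by
    obtain ⟨s, h1, h2⟩ := h r
    rw [RingHom.id_apply, h2, ← map_smul]
    congr 1
    exact Subtype.ext (h1 _)

theorem Thru.swap {A B : Type v} [AddCommGroup A] [Module R A] [Module R₀ A] [AddCommGroup B]
    [Module R B] [Module R₀ B] (h : Thru R R₀ A B) : Thru R R₀ B A := fun r =>
  (h r).imp fun _ h => ⟨h.2, h.1⟩

theorem Thru.left {A B : Type v} [AddCommGroup A] [Module R A] [Module R₀ A] [AddCommGroup B]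
    [Module R B] [Module R₀ B] (h : Thru R R₀ A B) : Thru R R₀ A A := fun r =>
  (h r).imp fun _ h => ⟨h.1, h.1⟩

theorem alm_tr {M Y : Type v} [AddCommGroup M] [Module R M] [Module R₀ M] [AddCommGroup Y]
    [Module R Y] [Module R₀ Y] (h1 : Thru R R₀ Y M) (h2 : Thru R₀ R Y M)
    (h : AlmostNInjective R M Y) : AlmostNInjective R₀ M Y := by
  intro X f
  rcases h (cs h1 X) (csv h1 X f) with ⟨g, hg⟩ | ⟨π, hπ, hπ0, k, hk⟩
  · exact Or.inl ⟨cv h2 g, fun x => hg ⟨x.1, x.2⟩⟩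
  · right
    refine alm_finish f (cv h2.swap ((LinearMap.range π).subtype ∘ₗ k)) (cv h2.left π) ?_ ?_ ?_ ?_
    · exact fun y => LinearMap.congr_fun hπ y
    · intro h0
      apply hπ0
      ext y
      exact LinearMap.congr_fun h0 y
    · intro x
      obtain ⟨z, hz⟩ := (k x).2
      change π (k x : Y) = k x
      rw [← hz]
      exact LinearMap.congr_fun hπ z
    · exact fun x => hk ⟨x.1, x.2⟩

theorem thru_hom {φ : R →+* R₀} {A B : Type v} [AddCommGroup A] [Module R A] [Module R₀ A]
    [AddCommGroup B] [Module R B] [Module R₀ B] (hA : ∀ r (x : A), φ r • x = r • x)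
    (hB : ∀ r (x : B), φ r • x = r • x) : Thru R R₀ A B :=
  fun r => ⟨φ r, fun x => (hA r x).symm, fun x => (hB r x).symm⟩

theorem thru_inv {φ : R →+* R₀} (hφ : Function.Surjective φ)
    {A B : Type v} [AddCommGroup A] [Module R A] [Module R₀ A]
    [AddCommGroup B] [Module R B] [Module R₀ B] (hA : ∀ r (x : A), φ r • x = r • x)
    (hB : ∀ r (x : B), φ r • x = r • x) : Thru R₀ R A B := by
  intro s
  obtain ⟨r, rfl⟩ := hφ s
  exact ⟨r, hA r, hB r⟩

/-- every module (in a fixed universe) is almost injective -/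
def One (R : Type u) [CommRing R] : Prop := ∀ (M : Type v) [AddCommGroup M] [Module R M],
  IsAlmostInjective.{u, v, v} R M

theorem one_tr {φ : R →+* R₀} (hφ : Function.Surjective φ) (h : One.{u, v} R) :
    One.{w, v} R₀ := by
  intro M _ _ Y _ _
  let : Module R M := Module.compHom M φ
  let : Module R Y := Module.compHom Y φ
  exact alm_tr (thru_hom (φ := φ) (fun _ _ => rfl) (fun _ _ => rfl))
    (thru_inv (φ := φ) hφ (fun _ _ => rfl) (fun _ _ => rfl)) (h M Y)

theorem ss_tr {M : Type v} [AddCommGroup M] [Module R M] [Module R₀ M] (h1 : Thru R R₀ M M)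
    (h2 : Thru R₀ R M M) {N : Submodule R M} (hN : IsSemisimpleModule R N) :
    IsSemisimpleModule R₀ (cs h2 N) := by
  apply ss_of_compl
  intro T hT
  obtain ⟨D, hD, h3, h4⟩ := ss_compl hN (T := cs h1 T) hT
  refine ⟨cs h2 D, hD, ?_, ?_⟩
  · rw [eq_bot_iff]
    rintro x ⟨hx1, hx2⟩
    have : x ∈ cs h1 T ⊓ D := ⟨hx1, hx2⟩
    rw [h3] at this
    exact this
  · apply le_antisymm (sup_le hT hD)
    intro x hx
    have hx' : x ∈ cs h1 T ⊔ D := by rw [h4]; exact hx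
    obtain ⟨y, hy, z, hz, rfl⟩ := mem_sup.1 hx'
    exact add_mem (mem_sup_left (S := T) (T := cs h2 D) hy) (mem_sup_right (S := T) (T := cs h2 D) hz)

theorem inj_of_ext {Q : Type v} [AddCommGroup Q] [Module R Q]
    (h : ∀ (Y : Type v) [AddCommGroup Y] [Module R Y] (X : Submodule R Y) (f : X →ₗ[R] Q),
      ∃ g : Y →ₗ[R] Q, ∀ x : X, g x = f x) : Module.Injective R Q := by
  refine ⟨fun X Y _ _ _ _ i hi f => ?_⟩
  let e := LinearEquiv.ofInjective i hi
  obtain ⟨g, hg⟩ := h Y (LinearMap.range i) (f ∘ₗ e.symm.toLinearMap)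
  refine ⟨g, fun x => ?_⟩
  have := hg (e x)
  simpa [e] using this

theorem two_tr {φ : R →+* R₀} (hφ : Function.Surjective φ) (h : Two.{u, v} R) :
    Two.{w, v} R₀ := by
  intro M _ _
  let : Module R M := Module.compHom M φ
  have t1 : Thru R R₀ M M := thru_hom (φ := φ) (fun _ _ => rfl) (fun _ _ => rfl)
  have t2 : Thru R₀ R M M := thru_inv (φ := φ) hφ (fun _ _ => rfl) (fun _ _ => rfl)
  obtain ⟨N, hN, hinj⟩ := h M
  refine ⟨cs t2 N, ss_tr t1 t2 hN, inj_of_ext fun Y _ _ X f => ?_⟩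
  let : Module R Y := Module.compHom Y φ
  let : Module R (M ⧸ cs t2 N) := Module.compHom _ φ
  have t3 : Thru R R₀ Y (M ⧸ cs t2 N) := thru_hom (φ := φ) (fun _ _ => rfl) (fun _ _ => rfl)
  have t4 : Thru R₀ R Y (M ⧸ cs t2 N) := thru_inv (φ := φ) hφ (fun _ _ => rfl) (fun _ _ => rfl)
  have t5 : Thru R R₀ M (M ⧸ cs t2 N) := thru_hom (φ := φ) (fun _ _ => rfl) (fun _ _ => rfl)
  let p : M →ₗ[R] (M ⧸ cs t2 N) := cv t5 (mkQ (cs t2 N))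
  have hpk : LinearMap.ker p = N := by
    ext x
    rw [LinearMap.mem_ker]
    change mkQ (cs t2 N) x = 0 ↔ _
    rw [mkQ_apply, Submodule.Quotient.mk_eq_zero]
    rfl
  have hps : Function.Surjective p := mkQ_surjective (cs t2 N)
  let e : (M ⧸ N) ≃ₗ[R] (M ⧸ cs t2 N) :=
    (Submodule.quotEquivOfEq _ _ hpk.symm).trans (p.quotKerEquivOfSurjective hps)
  obtain ⟨g, hg⟩ := hinj.out (cs t3 X).subtype (cs t3 X).subtype_injective
    (e.symm.toLinearMap ∘ₗ csv t3 X f)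
  refine ⟨cv t4 (e.toLinearMap ∘ₗ g), fun x => ?_⟩
  change e (g x) = f x
  have := hg ⟨x.1, x.2⟩
  rw [show g x = _ from this]
  change e (e.symm _) = _
  rw [e.apply_symm_apply]
  rfl

end tr

section small
variable {R : Type u} [CommRing R]

theorem exists_small (W : Type v) [AddCommGroup W] [Module R W] :
    ∃ (R₀ : Type v) (_ : CommRing R₀) (φ : R →+* R₀), Function.Surjective φ ∧
      ∀ r, φ r = 0 → ∀ x : W, r • x = 0 := by
  let I := Module.annihilator R W
  have : Small.{v} (R ⧸ I) := by
    let F : (R ⧸ I) → (W → W) := fun s x => Quotient.out s • x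
    refine small_of_injective (f := F) ?_
    intro s t hst
    rw [← Ideal.Quotient.mk_out s, ← Ideal.Quotient.mk_out t, Ideal.Quotient.eq]
    refine Module.mem_annihilator.2 fun x => ?_
    rw [sub_smul, sub_eq_zero]
    exact congrFun hst x
  refine ⟨Shrink.{v} (R ⧸ I), inferInstance,
    ((Shrink.ringEquiv (R ⧸ I)).symm : (R ⧸ I) →+* _).comp (Ideal.Quotient.mk I), ?_, ?_⟩
  · exact (Shrink.ringEquiv (R ⧸ I)).symm.surjective.comp Ideal.Quotient.mk_surjective
  · intro r hr
    have : Ideal.Quotient.mk I r = 0 := by simpa using hr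
    exact Module.mem_annihilator.1 (Ideal.Quotient.eq_zero_iff_mem.1 this)

theorem exists_mod {R₀ : Type w} [CommRing R₀] {φ : R →+* R₀} (hφ : Function.Surjective φ)
    (W : Type v) [AddCommGroup W] [Module R W] (h : ∀ r, φ r = 0 → ∀ x : W, r • x = 0) :
    ∃ _ : Module R₀ W, ∀ r (x : W), φ r • x = r • x := by
  let : SMul R₀ W := ⟨fun s x => Function.surjInv hφ s • x⟩
  have hs : ∀ r (x : W), φ r • x = r • x := by
    intro r x
    change Function.surjInv hφ (φ r) • x = r • x
    rw [← sub_eq_zero, ← sub_smul]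
    apply h
    rw [map_sub, Function.surjInv_eq hφ, sub_self]
  exact ⟨hφ.moduleLeft φ hs, hs⟩

theorem one_of_two' (h : Two.{u, v} R) : One.{u, v} R := by
  intro M _ _ Y _ _
  obtain ⟨R₀, _, φ, hφ, hk⟩ := exists_small (R := R) (M × Y)
  obtain ⟨iM, hM⟩ := exists_mod hφ M (fun r hr x => (Prod.ext_iff.1 (hk r hr (x, 0))).1)
  obtain ⟨iY, hY⟩ := exists_mod hφ Y (fun r hr x => (Prod.ext_iff.1 (hk r hr (0, x))).2)
  exact alm_tr (thru_inv hφ hY hM) (thru_hom hY hM) (alm_of_C3 (C3_of_two (two_tr hφ h)))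

theorem mem_smul_tr {R₀ : Type w} [CommRing R₀] {φ : R →+* R₀} (hφ : Function.Surjective φ)
    {M : Type v} [AddCommGroup M] [Module R M] [Module R₀ M] (hM : ∀ r (x : M), φ r • x = r • x)
    {m : Ideal R₀} {x : M} :
    x ∈ m • (⊤ : Submodule R₀ M) ↔ x ∈ (m.comap φ) • (⊤ : Submodule R M) := by
  constructor
  · intro hx
    refine Submodule.smul_induction_on hx (fun s hs n _ => ?_) (fun a b ha hb => add_mem ha hb)
    obtain ⟨r, rfl⟩ := hφ s
    rw [hM]
    exact smul_mem_smul hs mem_top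
  · intro hx
    refine Submodule.smul_induction_on hx (fun r hr n _ => ?_) (fun a b ha hb => add_mem ha hb)
    rw [← hM]
    exact smul_mem_smul hr mem_top

theorem mem_tor_tr {R₀ : Type w} [CommRing R₀] {φ : R →+* R₀} (hφ : Function.Surjective φ)
    {M : Type v} [AddCommGroup M] [Module R M] [Module R₀ M] (hM : ∀ r (x : M), φ r • x = r • x)
    {m : Ideal R₀} {x : M} : x ∈ tor m M ↔ x ∈ tor (m.comap φ) M := by
  rw [mem_tor, mem_tor]
  constructor
  · intro h μ hμ
    rw [← hM]
    exact h _ hμ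
  · intro h μ hμ
    obtain ⟨r, rfl⟩ := hφ μ
    rw [hM]
    exact h r hμ

theorem two_of_one' (hC3 : ∀ (R₀ : Type v) [CommRing R₀], One.{v, v} R₀ → C3 (socl R₀ R₀))
    (h : One.{u, v} R) : Two.{u, v} R := by
  intro M _ _
  obtain ⟨N, hN, h2, h3⟩ := exists_N R M
  refine ⟨N, hN, inj_of_ext fun Y _ _ X f => ?_⟩
  obtain ⟨R₀, _, φ, hφ, hk⟩ := exists_small (R := R) (M × Y)
  have hk1 : ∀ r, φ r = 0 → ∀ x : M, r • x = 0 :=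
    fun r hr x => (Prod.ext_iff.1 (hk r hr (x, 0))).1
  obtain ⟨iM, hM⟩ := exists_mod hφ M hk1
  obtain ⟨iY, hY⟩ := exists_mod hφ Y (fun r hr x => (Prod.ext_iff.1 (hk r hr (0, x))).2)
  obtain ⟨iQ, hQ⟩ := exists_mod hφ (M ⧸ N) (fun r hr x => by
    obtain ⟨y, rfl⟩ := mkQ_surjective N x
    rw [← map_smul, hk1 r hr, map_zero])
  have t1 : Thru R₀ R M (M ⧸ N) := thru_inv hφ hM hQ
  have t2 : Thru R₀ R Y (M ⧸ N) := thru_inv hφ hY hQ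
  have t3 : Thru R R₀ Y (M ⧸ N) := thru_hom hY hQ
  have hmax : ∀ m : Ideal R₀, m.IsMaximal → (m.comap φ).IsMaximal := fun m hm =>
    Ideal.comap_isMaximal_of_surjective φ hφ
  have h2' : N2 (cs t1 N) := fun m hm x hx hx1 hx2 =>
    h2 _ (hmax m hm) x hx ((mem_tor_tr hφ hM).1 hx1) ((mem_smul_tr hφ hM).1 hx2)
  have h3' : N3 (cs t1 N) := fun m hm x hx => by
    obtain ⟨ν, hν, κ, hκ, hκ', e⟩ := h3 _ (hmax m hm) x ((mem_tor_tr hφ hM).1 hx)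
    exact ⟨ν, hν, κ, (mem_smul_tr hφ hM).2 hκ, (mem_tor_tr hφ hM).2 hκ', e⟩
  obtain ⟨g, hg⟩ := quot_ext (hC3 R₀ (one_tr hφ h)) h2' h3' (cv t1 (mkQ N)) (mkQ_surjective N)
    (fun x => by
      change mkQ N x = 0 ↔ x ∈ N
      rw [mkQ_apply, Submodule.Quotient.mk_eq_zero]) (cs t2 X) (csv t2 X f)
  exact ⟨cv t3 g, fun x => hg ⟨x.1, x.2⟩⟩

end small
end AI

namespace AI
open Submodule

section one
variable {R : Type v} [CommRing R]

/-- essential submodule, elementwise -/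
def Ess {Y : Type w} [AddCommGroup Y] [Module R Y] (K : Submodule R Y) : Prop :=
  ∀ y : Y, y ≠ 0 → ∃ r : R, r • y ≠ 0 ∧ r • y ∈ K

theorem factD (h : One.{v, v} R) {Y : Type v} [AddCommGroup Y] [Module R Y] {K : Submodule R Y}
    (hK : Ess K) : IsSemisimpleModule R (Y ⧸ K) := by
  apply ssq_of_compl_top
  intro T hKT
  have hf0 : ∀ x : T, mkQ (K.comap T.subtype) x = 0 ↔ (x : Y) ∈ K := by
    intro x
    rw [mkQ_apply, Submodule.Quotient.mk_eq_zero]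
    rfl
  rcases h (T ⧸ K.comap T.subtype) Y T (mkQ _) with ⟨g, hg⟩ | ⟨π, hπ, hπ0, k, hk⟩
  · refine ⟨LinearMap.ker g, ?_, ?_, ?_⟩
    · intro x hx
      exact (hg ⟨x, hKT hx⟩).trans ((hf0 ⟨x, hKT hx⟩).2 hx)
    · rintro x ⟨hx1, hx2⟩
      exact (hf0 ⟨x, hx1⟩).1 ((hg ⟨x, hx1⟩).symm.trans hx2)
    · rw [eq_top_iff]
      intro y _
      obtain ⟨t, ht⟩ := mkQ_surjective _ (g y)
      rw [← hg t] at ht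
      rw [← add_sub_cancel (t : Y) y]
      refine add_mem (mem_sup_left t.2) (mem_sup_right ?_)
      rw [LinearMap.mem_ker, map_sub, ht, sub_self]
  · exfalso
    apply hπ0
    ext y
    by_contra hy
    obtain ⟨r, hr, hrK⟩ := hK _ hy
    have h1 := hk ⟨_, hKT hrK⟩
    rw [(hf0 _).2 hrK, map_zero] at h1
    have h2 : π (π y) = π y := LinearMap.congr_fun hπ y
    simp only [map_smul, h2] at h1
    exact hr h1.symm

theorem maximal_ess (hs : socl R R = ⊥) {m : Ideal R} (hm : m.IsMaximal) : Ess m := by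
  intro y hy
  by_contra hcon
  push Not at hcon
  apply hy
  have : y ∈ socl R R := by
    refine tor_le_socl hm (mem_tor.2 fun μ hμ => ?_)
    by_contra h0
    exact hcon μ h0 (m.mul_mem_right _ hμ)
  rwa [hs, mem_bot] at this

theorem red_of (hD : ∀ K : Ideal R, Ess K → IsSemisimpleModule R (R ⧸ K)) (hs : socl R R = ⊥)
    {a : R} (ha : a * a = 0) : a = 0 := by
  have hE : Ess (LinearMap.ker (LinearMap.toSpanSingleton R R a)) := by
    intro y hy
    by_cases hya : y * a = 0
    · exact ⟨1, by simpa using hy, by simpa using hya⟩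
    · refine ⟨a, by simpa [mul_comm] using hya, ?_⟩
      simp only [LinearMap.mem_ker, LinearMap.toSpanSingleton_apply, smul_eq_mul]
      rw [mul_right_comm, ha, zero_mul]
  have h1 := hD _ hE
  have h2 : IsSemisimpleModule R (LinearMap.range (LinearMap.toSpanSingleton R R a)) :=
    IsSemisimpleModule.of_surjective
      (LinearMap.quotKerEquivRange (LinearMap.toSpanSingleton R R a)).toLinearMap
      (LinearEquiv.surjective _)
  have h3 := ss_le_socl h2 ⟨1, rfl⟩
  rw [hs, mem_bot] at h3
  simpa using h3

theorem reg_of (hD : ∀ K : Ideal R, Ess K → IsSemisimpleModule R (R ⧸ K)) (hs : socl R R = ⊥)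
    (a : R) : ∃ x, a = x * (a * a) := by
  let Z : Ideal R := LinearMap.ker (LinearMap.toSpanSingleton R R a)
  have hZ : ∀ x, x ∈ Z ↔ x * a = 0 := fun x => by simp [Z]
  have hE : Ess (Ideal.span {a * a} ⊔ Z) := by
    intro y hy
    by_cases hya : y * a = 0
    · exact ⟨1, by simpa using hy, by
        rw [one_smul]; exact mem_sup_right ((hZ y).2 hya)⟩
    · refine ⟨a * a, ?_, mem_sup_left (Ideal.mul_mem_right _ _ (Ideal.mem_span_singleton_self _))⟩
      intro h0
      apply hya
      apply red_of hD hs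
      rw [smul_eq_mul] at h0
      linear_combination y * h0
  obtain ⟨D, hKD, h1, h2⟩ := ssq_compl_top (hD _ hE)
    (le_sup_right : _ ≤ Ideal.span {a} ⊔ (Ideal.span {a * a} ⊔ Z))
  have h3 : (1 : R) ∈ (Ideal.span {a} ⊔ (Ideal.span {a * a} ⊔ Z)) ⊔ D := by rw [h2]; trivial
  obtain ⟨t, ht, d, hd, htd⟩ := mem_sup.1 h3
  obtain ⟨p, hp, k, hk, rfl⟩ := mem_sup.1 ht
  obtain ⟨x, rfl⟩ := Ideal.mem_span_singleton'.1 hp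
  have haK : a ∈ Ideal.span {a * a} ⊔ Z := by
    have e : a = x * (a * a) + a * k + a * d := by linear_combination -a * htd
    have hd' : a * d ∈ Ideal.span {a * a} ⊔ Z := by
      rw [← h1]
      exact ⟨mem_sup_left (Ideal.mul_mem_right _ _ (Ideal.mem_span_singleton_self _)),
        Ideal.mul_mem_left D _ hd⟩
    have hx : x * (a * a) ∈ Ideal.span {a * a} ⊔ Z :=
      mem_sup_left (Ideal.mul_mem_left _ _ (Ideal.mem_span_singleton_self _))
    have := add_mem (add_mem hx (Ideal.mul_mem_left _ a hk)) hd'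
    rwa [← e] at this
  obtain ⟨p, hp, z, hz, hpz⟩ := mem_sup.1 haK
  obtain ⟨y, rfl⟩ := Ideal.mem_span_singleton'.1 hp
  have hz' := (hZ z).1 hz
  have hz0 : z = 0 := by
    apply red_of hD hs
    linear_combination z * hpz + (1 - y * a) * hz'
  exact ⟨y, by rw [hz0, add_zero] at hpz; exact hpz.symm⟩

theorem socl_ne_bot [Nontrivial R]
    (hD : ∀ K : Ideal R, Ess K → IsSemisimpleModule R (R ⧸ K)) : socl R R ≠ ⊥ := by
  intro hs
  obtain ⟨m, hm⟩ := Ideal.exists_maximal R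
  obtain ⟨𝒮, h𝒮⟩ := zorn_subset {S : Set R | (∀ s ∈ S, s ∈ m ∧ s * s = s ∧ s ≠ 0) ∧
      S.Pairwise fun s t => s * t = 0} (by
    intro c hc hch
    refine ⟨⋃₀ c, ⟨?_, ?_⟩, fun s hs => Set.subset_sUnion_of_mem hs⟩
    · rintro s ⟨S, hS, hsS⟩
      exact (hc hS).1 s hsS
    · exact (Set.pairwise_sUnion hch.directedOn).2 fun S hS => (hc hS).2)
  obtain ⟨⟨hS1, hS2⟩, hmax⟩ := h𝒮
  have hZ : ∀ y : R, y ≠ 0 → ∃ s ∈ 𝒮, s * y ≠ 0 := by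
    intro y hy
    by_contra hcon
    push Not at hcon
    obtain ⟨r, hr, hrm⟩ := maximal_ess hs hm y hy
    obtain ⟨x, hx⟩ := reg_of hD hs (r • y)
    rw [smul_eq_mul] at hr hrm hx
    have hidem : x * (r * y) * (x * (r * y)) = x * (r * y) := by
      linear_combination -x * hx
    have hne : x * (r * y) ≠ 0 := by
      intro h0
      apply hr
      rw [hx, ← mul_assoc, h0, zero_mul]
    have hort : ∀ s ∈ 𝒮, s * (x * (r * y)) = 0 := by
      intro s hs
      linear_combination x * r * hcon s hs
    have hins : insert (x * (r * y)) 𝒮 ∈ {S : Set R | (∀ s ∈ S, s ∈ m ∧ s * s = s ∧ s ≠ 0) ∧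
      S.Pairwise fun s t => s * t = 0} := by
      refine ⟨?_, ?_⟩
      · rintro s (rfl | hs)
        · exact ⟨m.mul_mem_left _ hrm, hidem, hne⟩
        · exact hS1 s hs
      · refine hS2.insert fun s hs _ => ⟨?_, hort s hs⟩
        rw [mul_comm]
        exact hort s hs
    have := hmax hins (Set.subset_insert _ _) (Set.mem_insert _ _)
    exact hne (by rw [← hidem]; exact hort _ this)
  have hM : ∀ s : 𝒮, ∃ n : Ideal R, n.IsMaximal ∧ (s : R) ∉ n := by
    intro s
    obtain ⟨-, h1, h2⟩ := hS1 s s.2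
    have hnt : Ideal.span {1 - (s : R)} ≠ ⊤ := by
      intro htop
      have h3 : (1 : R) ∈ Ideal.span {1 - (s : R)} := by rw [htop]; trivial
      obtain ⟨x, hx⟩ := Ideal.mem_span_singleton'.1 h3
      apply h2
      linear_combination -(s : R) * hx - x * h1
    obtain ⟨n, hn, hle⟩ := Ideal.exists_le_maximal _ hnt
    refine ⟨n, hn, fun hsn => hn.ne_top ((Ideal.eq_top_iff_one n).2 ?_)⟩
    have := n.add_mem hsn (hle (Ideal.mem_span_singleton_self _))
    simpa using this
  choose n hn hns using hM
  have hE : Ess (⨅ s : 𝒮, n s) := by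
    intro y hy
    obtain ⟨s, hs', hsy⟩ := hZ y hy
    obtain ⟨r, hr, hrm⟩ := maximal_ess hs (hn ⟨s, hs'⟩) _ hsy
    refine ⟨r * s, by simpa [mul_assoc] using hr, ?_⟩
    rw [Submodule.mem_iInf]
    intro t
    by_cases hts : t = ⟨s, hs'⟩
    · rw [hts]
      simpa [mul_assoc] using hrm
    · have h0 : (t : R) * s = 0 := hS2 t.2 hs' (fun h => hts (Subtype.ext h))
      have hsn : s ∈ n t := by
        refine ((hn t).isPrime.mem_or_mem (x := (t : R)) (y := s) ?_).resolve_left (hns t)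
        rw [h0]
        exact zero_mem _
      rw [smul_eq_mul]
      exact (n t).mul_mem_right _ ((n t).mul_mem_left _ hsn)
  obtain ⟨D, hKD, h1, h2⟩ := ssq_compl_top (hD _ hE)
    (le_sup_right : _ ≤ Ideal.span 𝒮 ⊔ ⨅ s : 𝒮, n s)
  have h3 : (1 : R) ∈ (Ideal.span 𝒮 ⊔ ⨅ s : 𝒮, n s) ⊔ D := by rw [h2]; trivial
  obtain ⟨t, ht, d, hd, htd⟩ := mem_sup.1 h3
  obtain ⟨j, hj, k, hk, rfl⟩ := mem_sup.1 ht
  have hje : ∃ e, e ∉ m ∧ ∀ t ∈ 𝒮, t * e ≠ 0 → t * j = 0 := by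
    refine Submodule.span_induction (p := fun j _ => ∃ e, e ∉ m ∧ ∀ t ∈ 𝒮, t * e ≠ 0 → t * j = 0)
      ?_ ?_ ?_ ?_ hj
    · intro s hs
      refine ⟨1 - s, one_sub_notMem hm (hS1 s hs).1, fun t ht h0 => ?_⟩
      refine hS2 ht hs fun hts => h0 ?_
      subst hts
      linear_combination -(hS1 t hs).2.1
    · exact ⟨1, fun h => hm.ne_top ((Ideal.eq_top_iff_one m).2 h), fun t _ _ => mul_zero t⟩
    · rintro x y _ _ ⟨e, he, hex⟩ ⟨e', he', hey⟩
      refine ⟨e * e', fun h => (hm.isPrime.mem_or_mem h).elim he he', fun t ht h0 => ?_⟩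
      rw [mul_add, hex t ht, hey t ht, add_zero]
      · intro h; apply h0; linear_combination e * h
      · intro h; apply h0; linear_combination e' * h
    · rintro r x _ ⟨e, he, hex⟩
      refine ⟨e, he, fun t ht h0 => ?_⟩
      rw [smul_eq_mul, mul_left_comm, hex t ht h0, mul_zero]
  obtain ⟨e, he, hej⟩ := hje
  obtain ⟨t, ht, hte⟩ := hZ e (fun h => he (by rw [h]; exact m.zero_mem))
  have h4 := hej t ht hte
  have h5 : t * d ∈ ⨅ s : 𝒮, n s := by
    rw [← h1]
    exact ⟨mem_sup_left (Ideal.mul_mem_right _ _ (Ideal.subset_span ht)), Ideal.mul_mem_left D _ hd⟩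
  have h6 : t ∈ ⨅ s : 𝒮, n s := by
    have e1 : t = t * k + t * d := by linear_combination -t * htd + h4
    have := add_mem (Ideal.mul_mem_left _ t hk) h5
    rwa [← e1] at this
  exact hns ⟨t, ht⟩ ((Submodule.mem_iInf _).1 h6 ⟨t, ht⟩)

theorem soc_ess (h : One.{v, v} R) : Ess (socl R R) := by
  intro c hc
  let I : Ideal R := LinearMap.ker (LinearMap.toSpanSingleton R R c)
  have hI : ∀ x, x ∈ I ↔ x * c = 0 := fun x => by simp [I]
  have hI1 : I ≠ ⊤ := fun ht => hc (by
    have := (hI 1).1 (by rw [ht]; trivial)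
    simpa using this)
  have : Nontrivial (R ⧸ I) := Ideal.Quotient.nontrivial_iff.2 hI1
  have hL : One.{v, v} (R ⧸ I) := one_tr (φ := Ideal.Quotient.mk I) Ideal.Quotient.mk_surjective h
  have hne := socl_ne_bot (R := R ⧸ I) (fun K hK => factD hL hK)
  have : ∃ m : {m : Ideal (R ⧸ I) // m.IsMaximal}, tor m.1 (R ⧸ I) ≠ ⊥ := by
    by_contra hcon
    push Not at hcon
    exact hne (by rw [socl, iSup_eq_bot]; exact hcon)
  obtain ⟨⟨m, hm⟩, hmb⟩ := this
  obtain ⟨x, hx, hx0⟩ := (Submodule.ne_bot_iff _).1 hmb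
  obtain ⟨r, rfl⟩ := Ideal.Quotient.mk_surjective x
  refine ⟨r, fun h0 => hx0 (Ideal.Quotient.eq_zero_iff_mem.2 ((hI r).2 h0)), ?_⟩
  refine tor_le_socl (Ideal.comap_isMaximal_of_surjective (Ideal.Quotient.mk I)
    Ideal.Quotient.mk_surjective (K := m)) (mem_tor.2 fun μ hμ => ?_)
  have h1 := mem_tor.1 hx _ hμ
  rw [smul_eq_mul, ← map_mul] at h1
  have h2 := (hI _).1 (Ideal.Quotient.eq_zero_iff_mem.1 h1)
  rw [smul_eq_mul, smul_eq_mul, ← mul_assoc, h2]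

theorem C3_of_one (h : One.{v, v} R) : C3 (socl R R) := by
  have hRS := factD h (soc_ess h)
  refine ⟨socl_ss, hRS, fun m hm => ?_⟩
  by_cases hp : Pur m
  · exact Or.inl hp
  right
  obtain ⟨a, ham, ha0, hma⟩ := exists_a hm socl_ss hRS hp
  obtain ⟨C, -, hC⟩ := exists_maxav (a := a) (C0 := ⊥) (by simpa using ha0)
  exact ⟨soc_le_of_not_pur hm socl_ss hp,
    (good_of hm rfl hRS ham ha0 hma hC).thr_of_one (h (R ⧸ m) R)⟩

end one
end AI

/-- Theorem 3.5: over a commutative ring `R`, every `R`-module is almost injective iff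
every `R`-module is an extension of a semisimple module by an injective module. -/
theorem comm_every_module_almostInjective_iff (R : Type u) [CommRing R] :
    (∀ (M : Type v) [AddCommGroup M] [Module R M], IsAlmostInjective.{u, v, v} R M) ↔
    (∀ (M : Type v) [AddCommGroup M] [Module R M],
      ∃ N : Submodule R M, IsSemisimpleModule R ↥N ∧ Module.Injective R (M ⧸ N)) := by
  exact ⟨fun h => AI.two_of_one' (fun R₀ _ h₀ => AI.C3_of_one h₀) h, fun h => AI.one_of_two' h⟩
end

section
/- Let R be a ring and M a right R-module such that every simple module in σ(M) is almost projective. Then every module in σ(M) that is not semisimple contains a nonzero M-injective submodule; in particular, for every non-semisimple cyclic module xR ∈ σ(M) with essential maximal submodule N, any injective hull of xR in σ(M) has a nonzero direct summand contained in xR. -/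
universe u v w

section Helpers

theorem inSigma_of_injective {A : Type u} [Ring A] {M : Type v} [AddCommGroup M] [Module A M]
    {N : Type v} [AddCommGroup N] [Module A N] {Y : Type v} [AddCommGroup Y] [Module A Y]
    (hN : InSigma A M N) (f : Y →ₗ[A] N) (hf : Function.Injective f) : InSigma A M Y := by
  obtain ⟨ι, K, P, ⟨e⟩⟩ := hN
  let g : Y →ₗ[A] ((ι →₀ M) ⧸ K) := P.subtype ∘ₗ e.toLinearMap ∘ₗ f
  have hg : Function.Injective g :=
    P.injective_subtype.comp (e.injective.comp hf)
  exact ⟨ι, K, LinearMap.range g, ⟨LinearEquiv.ofInjective g hg⟩⟩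

theorem inSigma_quotient {A : Type u} [Ring A] {M : Type v} [AddCommGroup M] [Module A M]
    {X : Type v} [AddCommGroup X] [Module A X]
    (hX : InSigma A M X) (L : Submodule A X) : InSigma A M (X ⧸ L) := by
  obtain ⟨ι, K, P, ⟨e⟩⟩ := hX
  let g : X →ₗ[A] ((ι →₀ M) ⧸ K) := P.subtype ∘ₗ e.toLinearMap
  have hg : Function.Injective g := P.injective_subtype.comp e.injective
  let K' : Submodule A (ι →₀ M) := (L.map g).comap K.mkQ
  have hK : K ≤ K' := by
    intro x hx
    change K.mkQ x ∈ L.map g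
    have : K.mkQ x = 0 := by simpa using hx
    rw [this]; exact zero_mem _
  let p : ((ι →₀ M) ⧸ K) →ₗ[A] ((ι →₀ M) ⧸ K') := K.mapQ K' LinearMap.id hK
  have hp : ∀ y, p y = 0 ↔ y ∈ L.map g := by
    intro y
    obtain ⟨y, rfl⟩ := K.mkQ_surjective y
    change K'.mkQ y = 0 ↔ _
    simp [K']
  have hk : LinearMap.ker (p ∘ₗ g) = L := by
    ext x
    simp only [LinearMap.mem_ker, LinearMap.comp_apply, hp]
    constructor
    · rintro ⟨y, hy, hxy⟩
      rwa [← hg hxy]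
    · intro hx
      exact ⟨x, hx, rfl⟩
  let q : (X ⧸ L) →ₗ[A] ((ι →₀ M) ⧸ K') := L.liftQ (p ∘ₗ g) hk.ge
  have hq : Function.Injective q := by
    rw [← LinearMap.ker_eq_bot]
    exact Submodule.ker_liftQ_eq_bot _ _ _ hk.le
  exact ⟨ι, K', LinearMap.range q, ⟨LinearEquiv.ofInjective q hq⟩⟩

theorem inSigma_smul_eq_zero {A : Type u} [Ring A] {M : Type v} [AddCommGroup M] [Module A M]
    {X : Type v} [AddCommGroup X] [Module A X]
    (hX : InSigma A M X) (a : A) (ha : ∀ m : M, a • m = 0) (x : X) : a • x = 0 := by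
  obtain ⟨ι, K, P, ⟨e⟩⟩ := hX
  apply e.injective
  rw [map_smul, map_zero]
  ext
  obtain ⟨y, hy⟩ := K.mkQ_surjective (e x : (ι →₀ M) ⧸ K)
  rw [Submodule.coe_smul, ← hy, ← map_smul]
  have : a • y = 0 := by
    ext i; simp [ha]
  rw [this]; simp

/-- An almost projective quotient by an essential maximal submodule gives a summand. -/
theorem exists_summand {A : Type u} [Ring A] {X : Type v} [AddCommGroup X] [Module A X]
    {E : Type v} [AddCommGroup E] [Module A E] (L : Submodule A X) (hL : IsCoatom L)
    (hess : IsEssentialSubmodule A L) (hap : AlmostNProjective A (X ⧸ L) E)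
    (j : X →ₗ[A] E) (hj : Function.Injective j) :
    ∃ D : Submodule A E, D ≠ ⊥ ∧ IsDirectSummand A D ∧ D ≤ LinearMap.range j := by
  have hle : L ≤ (L.map j).comap j := Submodule.le_comap_map _ _
  let f : (X ⧸ L) →ₗ[A] E ⧸ (L.map j) := L.mapQ (L.map j) j hle
  have hf : ∀ x : X, f (L.mkQ x) = (L.map j).mkQ (j x) := fun x => rfl
  have hmem : ∀ (e : E) (s : X ⧸ L), (L.map j).mkQ e = f s → e ∈ LinearMap.range j := by
    intro e s h
    obtain ⟨x, rfl⟩ := L.mkQ_surjective s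
    rw [hf, ← sub_eq_zero, ← map_sub] at h
    have h2 : e - j x ∈ L.map j := (Submodule.Quotient.mk_eq_zero _).1 h
    obtain ⟨y, -, hy⟩ := h2
    exact ⟨y + x, by rw [map_add, hy]; abel⟩
  rcases hap (L.map j) f with ⟨h, hh⟩ | ⟨D, hD, hs, h', hh'⟩
  · exfalso
    -- pull `h` back to `X`
    have hL' : ∃ x, x ∉ L := by
      by_contra hc
      push Not at hc
      exact hL.1 (Submodule.eq_top_iff'.2 hc)
    obtain ⟨x, hx⟩ := hL'
    let K : Submodule A X := (LinearMap.range h).comap j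
    have hK : K ≠ ⊥ := by
      intro hb
      obtain ⟨y, hy⟩ := hmem (h (L.mkQ x)) (L.mkQ x) (hh _)
      have hyK : y ∈ K := ⟨L.mkQ x, hy.symm⟩
      rw [hb, Submodule.mem_bot] at hyK
      have h1 := hh (L.mkQ x)
      rw [← hy, hyK, map_zero, map_zero, hf] at h1
      have h2 : j x ∈ L.map j := by simpa using h1.symm
      obtain ⟨z, hz, hzx⟩ := h2
      exact hx (hj hzx ▸ hz)
    apply hess K hK
    rw [eq_bot_iff]
    rintro z ⟨hzL, s, hs⟩
    obtain ⟨w, rfl⟩ := L.mkQ_surjective s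
    have h1 := hh (L.mkQ w)
    rw [hs, hf] at h1
    have h0 : (L.map j).mkQ (j z) = 0 := by
      simpa using Submodule.mem_map_of_mem (f := j) hzL
    rw [h0] at h1
    have h2 : j w ∈ L.map j := by simpa using h1.symm
    obtain ⟨w', hw', hww⟩ := h2
    have hwL : w ∈ L := hj hww ▸ hw'
    have h3 : L.mkQ w = 0 := by simpa using hwL
    rw [h3, map_zero] at hs
    rw [Submodule.mem_bot]
    exact hj (by rw [← hs, map_zero])
  · exact ⟨D, hD, hs, fun e he => hmem e _ (hh' ⟨e, he⟩)⟩

theorem relInjective_of_retract {A : Type u} [Ring A] {M : Type v} [AddCommGroup M] [Module A M]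
    {E : Type v} [AddCommGroup E] [Module A E] {U : Type v} [AddCommGroup U] [Module A U]
    (hE : RelInjective A M E) (i : U →ₗ[A] E) (r : E →ₗ[A] U) (h : ∀ u, r (i u) = u) :
    RelInjective A M U := by
  intro K f
  obtain ⟨g, hg⟩ := hE K (i ∘ₗ f)
  exact ⟨r ∘ₗ g, fun x => by simp [hg, h]⟩

theorem exists_injective_module {B : Type u} [Ring B] [Small.{v} B]
    (X : Type v) [AddCommGroup X] [Module B X] :
    ∃ (E : Type v) (_ : AddCommGroup E) (_ : Module B E),
      Module.Injective B E ∧ ∃ j : X →ₗ[B] E, Function.Injective j := by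
  obtain ⟨⟨I, hI, f, hf⟩⟩ :=
    CategoryTheory.EnoughInjectives.presentation (ModuleCat.of B X)
  refine ⟨I, inferInstance, inferInstance, ?_, f.hom, ?_⟩
  · exact Module.injective_module_of_injective_object B I
  · exact (ModuleCat.mono_iff_injective f).1 hf

theorem exists_relInjective {A : Type u} [Ring A] {M : Type v} [AddCommGroup M] [Module A M]
    (X : Type v) [AddCommGroup X] [Module A X] (hX : InSigma A M X) :
    ∃ (E : Type v) (_ : AddCommGroup E) (_ : Module A E),
      RelInjective A M E ∧ ∃ j : X →ₗ[A] E, Function.Injective j := by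
  let I : Ideal A := Module.annihilator A M
  have hM : Module.IsTorsionBySet A M I := Module.isTorsionBySet_annihilator A M
  have hXI : Module.IsTorsionBySet A X I := fun x a =>
    inSigma_smul_eq_zero hX a.1 (fun m => Module.mem_annihilator.1 a.2 m) x
  let _ : Module (A ⧸ I) M := hM.module
  let _ : Module (A ⧸ I) X := hXI.module
  have hMs : ∀ (a : A) (m : M), (Ideal.Quotient.mk I a) • m = a • m := fun _ _ => rfl
  have hXs : ∀ (a : A) (m : X), (Ideal.Quotient.mk I a) • m = a • m := fun _ _ => rfl
  have : Small.{v} (A ⧸ I) := by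
    refine small_of_injective (f := fun b : A ⧸ I => fun m : M => b • m) ?_
    intro b c hbc
    obtain ⟨b, rfl⟩ := Ideal.Quotient.mk_surjective b
    obtain ⟨c, rfl⟩ := Ideal.Quotient.mk_surjective c
    rw [Ideal.Quotient.eq]
    refine Module.mem_annihilator.2 fun m => ?_
    have := congrFun hbc m
    simp only [hMs] at this
    rw [sub_smul, this, sub_self]
  obtain ⟨E, iE, mE, hE, j, hj⟩ := exists_injective_module (B := A ⧸ I) X
  let _ : Module A E := Module.compHom E (Ideal.Quotient.mk I)
  have hEs : ∀ (a : A) (m : E), (Ideal.Quotient.mk I a) • m = a • m := fun _ _ => rfl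
  refine ⟨E, iE, inferInstance, ?_, ⟨⟨j, map_add j⟩, fun a x => ?_⟩, hj⟩
  · intro K f
    let K' : Submodule (A ⧸ I) M :=
      { K.toAddSubmonoid with
        smul_mem' := by
          intro b x hx
          obtain ⟨b, rfl⟩ := Ideal.Quotient.mk_surjective b
          exact K.smul_mem b hx }
    let f' : K' →ₗ[A ⧸ I] E :=
      { toFun := fun x => f ⟨x.1, x.2⟩
        map_add' := fun x y => f.map_add ⟨x.1, x.2⟩ ⟨y.1, y.2⟩
        map_smul' := by
          intro b x
          obtain ⟨b, rfl⟩ := Ideal.Quotient.mk_surjective b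
          exact f.map_smul b ⟨x.1, x.2⟩ }
    obtain ⟨g, hg⟩ := hE.out K'.subtype K'.injective_subtype f'
    exact ⟨⟨⟨g, map_add g⟩, fun a x => g.map_smul (Ideal.Quotient.mk I a) x⟩,
      fun x => hg ⟨x.1, x.2⟩⟩
  · exact j.map_smul (Ideal.Quotient.mk I a) x

theorem exists_cyclic_essential {A : Type u} [Ring A] {N : Type v} [AddCommGroup N] [Module A N]
    (hN : ¬ IsSemisimpleModule A N) :
    ∃ (X : Submodule A N) (L : Submodule A X), IsCoatom L ∧ IsEssentialSubmodule A L := by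
  let T : Submodule A N := sSup {m : Submodule A N | IsSimpleModule A m}
  have hT : T ≠ ⊤ := fun h => hN (.of_sSup_simples_eq_top h)
  obtain ⟨x, hx⟩ : ∃ x, x ∉ T := by
    by_contra hc
    push Not at hc
    exact hT (Submodule.eq_top_iff'.2 hc)
  let X : Submodule A N := Submodule.span A {x}
  have hxX : x ∈ X := Submodule.mem_span_singleton_self x
  have : Module.Finite A X := Module.Finite.iff_fg.2 (Submodule.fg_span_singleton x)
  have hT' : T.comap X.subtype ≠ ⊤ := by
    intro h
    have : (⟨x, hxX⟩ : X) ∈ T.comap X.subtype := h ▸ Submodule.mem_top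
    exact hx this
  obtain ⟨L, hL, hTL⟩ := (eq_top_or_exists_le_coatom (T.comap X.subtype)).resolve_left hT'
  refine ⟨X, L, hL, fun K hK hLK => ?_⟩
  have hKL : ¬ K ≤ L := by
    intro h
    rw [inf_eq_right.2 h] at hLK
    exact hK hLK
  have hc : IsCompl L K := by
    refine ⟨disjoint_iff.2 hLK, codisjoint_iff.2 ?_⟩
    apply hL.2
    exact lt_of_le_of_ne le_sup_left fun h => hKL (h ▸ le_sup_right)
  have hKa : IsAtom K := hc.isCoatom_iff_isAtom.1 hL
  have : IsSimpleModule A K := isSimpleModule_iff_isAtom.2 hKa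
  have hs : IsSimpleModule A (K.map X.subtype) :=
    IsSimpleModule.congr (Submodule.equivMapOfInjective _ X.injective_subtype K).symm
  have : K.map X.subtype ≤ T := le_sSup hs
  exact hKL ((Submodule.map_le_iff_le_comap.1 this).trans hTL)

end Helpers

/-- If every simple module in `σ(M)` is almost projective, then every non-semisimple
module in `σ(M)` contains a nonzero `M`-injective submodule; in particular, for every
non-semisimple cyclic module `xR ∈ σ(M)` with an essential maximal submodule, any
injective hull of `xR` in `σ(M)` has a nonzero direct summand contained in `xR`. -/
theorem simple_almostProjective_consequences (R : Type u) [Ring R]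
    (M : Type v) [AddCommGroup M] [Module Rᵐᵒᵖ M]
    (hsimple : ∀ (S : Type v) [AddCommGroup S] [Module Rᵐᵒᵖ S],
      IsSimpleModule Rᵐᵒᵖ S → InSigma Rᵐᵒᵖ M S → IsAlmostProjective.{u, v, v} Rᵐᵒᵖ S) :
    (∀ (N : Type v) [AddCommGroup N] [Module Rᵐᵒᵖ N], InSigma Rᵐᵒᵖ M N →
      ¬ IsSemisimpleModule Rᵐᵒᵖ N →
        ∃ U : Submodule Rᵐᵒᵖ N, U ≠ ⊥ ∧ RelInjective Rᵐᵒᵖ M ↥U) ∧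
    (∀ (X : Type v) [AddCommGroup X] [Module Rᵐᵒᵖ X], InSigma Rᵐᵒᵖ M X →
      (∃ x : X, Submodule.span Rᵐᵒᵖ ({x} : Set X) = ⊤) →
      ¬ IsSemisimpleModule Rᵐᵒᵖ X →
      ∀ N : Submodule Rᵐᵒᵖ X, IsCoatom N → IsEssentialSubmodule Rᵐᵒᵖ N →
      ∀ (E : Type v) [AddCommGroup E] [Module Rᵐᵒᵖ E], InSigma Rᵐᵒᵖ M E →
        (∀ (W : Type v) [AddCommGroup W] [Module Rᵐᵒᵖ W], InSigma Rᵐᵒᵖ M W →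
          RelInjective Rᵐᵒᵖ W E) →
        ∀ j : X →ₗ[Rᵐᵒᵖ] E, Function.Injective j →
          IsEssentialSubmodule Rᵐᵒᵖ (LinearMap.range j) →
          ∃ D : Submodule Rᵐᵒᵖ E, D ≠ ⊥ ∧ IsDirectSummand Rᵐᵒᵖ D ∧
            D ≤ LinearMap.range j) := by
  constructor
  · intro N _ _ hN hns
    obtain ⟨X, L, hL, hess⟩ := exists_cyclic_essential hns
    have hX : InSigma Rᵐᵒᵖ M X := inSigma_of_injective hN X.subtype X.injective_subtype
    have hS : IsSimpleModule Rᵐᵒᵖ (X ⧸ L) := isSimpleModule_iff_isCoatom.2 hL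
    obtain ⟨E, _, _, hE, j, hj⟩ := exists_relInjective X hX
    obtain ⟨D, hD, ⟨C, hC⟩, hDj⟩ := exists_summand L hL hess
      (hsimple (X ⧸ L) hS (inSigma_quotient hX L) E) j hj
    let V : Submodule Rᵐᵒᵖ X := D.comap j
    have hV : V.map j = D := Submodule.map_comap_eq_of_le hDj
    let e₁ := Submodule.equivMapOfInjective X.subtype X.injective_subtype V
    let e₂ := (Submodule.equivMapOfInjective j hj V).trans (LinearEquiv.ofEq _ _ hV)
    let e := e₁.symm.trans e₂
    refine ⟨V.map X.subtype, ?_, ?_⟩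
    · intro h
      replace h : V = ⊥ := Submodule.map_injective_of_injective X.injective_subtype
        (h.trans (Submodule.map_bot _).symm)
      rw [h, Submodule.map_bot] at hV
      exact hD hV.symm
    · refine relInjective_of_retract hE (D.subtype ∘ₗ e.toLinearMap)
        (e.symm.toLinearMap ∘ₗ D.projectionOnto C hC) ?_
      intro u
      simp
  · intro X _ _ hX _ _ L hL hess E _ _ _ _ j hj _
    have hS : IsSimpleModule Rᵐᵒᵖ (X ⧸ L) := isSimpleModule_iff_isCoatom.2 hL
    exact exists_summand L hL hess (hsimple (X ⧸ L) hS (inSigma_quotient hX L) E) j hj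
end
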